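/- arXiv:2011.01702 — 2 statements merged into one kernel-verified Lean document; each statement's English description precedes it below -/
import Mathlib

section
/- Let K be a field and T a K-linear triangulated category with a full strong exceptional sequence ⟨E₁, E₂⟩ such that dim_K Hom(E₁, E₂) < ∞. For i = 1, 2 let T_i be the full subcategory of objects isomorphic to finite direct sums ⊕_ℓ E_i^{⊕b_ℓ}[ℓ], and let A_i be the full subcategory of objects isomorphic to E_i^{⊕b} for b ≥ 0. Then: T = ⟨T₁, T₂⟩ is a semiorthogonal decomposition; T_i^{≤0} := { ⊕_{ℓ≥0} E_i^{⊕b_ℓ}[ℓ] } is a bounded t-structure on T_i with heart A_i; these two t-structures are compatible in T; and the glued subcategory A := A₂ * (A₁[1]) is the heart of a bounded t-structure on T with dim_T A ≤ 1. -/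
open CategoryTheory Category Limits Pretriangulated
namespace Paper


universe v u

variable {C : Type u} [Category.{v} C] [HasZeroObject C] [Preadditive C]
  [HasShift C ℤ] [∀ n : ℤ, (shiftFunctor C n).Additive] [Pretriangulated C]

/-- The right orthogonal of a set of objects: objects receiving only zero maps. -/
def rOrth (S : Set C) : Set C := {Y | ∀ X ∈ S, ∀ f : X ⟶ Y, f = 0}

/-- Shift of a set of objects by `n` (closed under isomorphism). -/
def shSet (S : Set C) (n : ℤ) : Set C := {Y | ∃ X ∈ S, Nonempty (Y ≅ X⟦n⟧)}

/-- The `*` operation on sets of objects of a triangulated category. -/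
def star (X Y : Set C) : Set C :=
  {Z | ∃ (A : C) (_ : A ∈ X) (B : C) (_ : B ∈ Y) (f : A ⟶ Z) (g : Z ⟶ B)
    (h : B ⟶ A⟦(1 : ℤ)⟧), Triangle.mk f g h ∈ distTriang C}

/-- A strictly full triangulated subcategory, encoded as a set of objects. -/
structure IsTriangulatedSub (S : Set C) : Prop where
  zero : ∀ X : C, IsZero X → X ∈ S
  isoClosed : ∀ {X Y : C}, (X ≅ Y) → X ∈ S → Y ∈ S
  shift : ∀ (n : ℤ), ∀ X ∈ S, X⟦n⟧ ∈ S
  ext₂ : ∀ T ∈ distTriang C, T.obj₁ ∈ S → T.obj₃ ∈ S → T.obj₂ ∈ S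

/-- A t-structure on the full triangulated subcategory `S ⊆ C`, given by its aisle
`le` (playing the role of `S^{≤ 0}`).  The coaisle `S^{≥ 1}` is `S ∩ rOrth le`. -/
structure IsTStructureOn (S le : Set C) : Prop where
  subset : le ⊆ S
  isoClosed : ∀ {X Y : C}, (X ≅ Y) → X ∈ le → Y ∈ le
  shift : ∀ X ∈ le, X⟦(1 : ℤ)⟧ ∈ le
  exists_triangle : ∀ E ∈ S, ∃ (A B : C) (_ : A ∈ le) (_ : B ∈ S ∩ rOrth le)
    (f : A ⟶ E) (g : E ⟶ B) (h : B ⟶ A⟦(1 : ℤ)⟧), Triangle.mk f g h ∈ distTriang C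

/-- `S^{≤ i} := S^{≤ 0}[-i]`. -/
def leN (le : Set C) (i : ℤ) : Set C := shSet le (-i)

/-- `S^{≥ j} := S^{≥ 1}[-j+1]`. -/
def geN (S le : Set C) (j : ℤ) : Set C := shSet (S ∩ rOrth le) (1 - j)

/-- The heart `S^{≤ 0} ∩ S^{≥ 0}` of a t-structure on `S`. -/
def heartOn (S le : Set C) : Set C := leN le 0 ∩ geN S le 0

/-- Boundedness of a t-structure on `S`. -/
def IsBoundedOn (S le : Set C) : Prop := ∀ E ∈ S, ∃ i j : ℤ, E ∈ leN le i ∧ E ∈ geN S le j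

/-- Non-degeneracy of a t-structure on `S`. -/
def IsNonDegenerateOn (S le : Set C) : Prop :=
  (∀ E : C, (∀ i : ℤ, E ∈ leN le i) → IsZero E) ∧
  (∀ E : C, (∀ j : ℤ, E ∈ geN S le j) → IsZero E)

/-- A semiorthogonal decomposition `C = ⟨S₁, S₂⟩`. -/
structure IsSOD (S₁ S₂ : Set C) : Prop where
  sub₁ : IsTriangulatedSub S₁
  sub₂ : IsTriangulatedSub S₂
  orth : ∀ X ∈ S₂, ∀ Y ∈ S₁, ∀ f : X ⟶ Y, f = 0
  exists_triangle : ∀ E : C, ∃ (A B : C) (_ : A ∈ S₂) (_ : B ∈ S₁)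
    (f : A ⟶ E) (g : E ⟶ B) (h : B ⟶ A⟦(1 : ℤ)⟧), Triangle.mk f g h ∈ distTriang C

/-- Compatibility of t-structures `le₁` on `S₁` and `le₂` on `S₂` in `C`:
`Hom(S₁^{≤0}, S₂^{≥1}) = 0`. -/
def Compatible (S₂ le₁ le₂ : Set C) : Prop :=
  ∀ X ∈ le₁, ∀ Y ∈ S₂ ∩ rOrth le₂, ∀ f : X ⟶ Y, f = 0

/-- The glued aisle `T^{≤0} := T₂^{≤0} * (T₁^{≤0}[1])`. -/
def glued (le₁ le₂ : Set C) : Set C := star le₂ (shSet le₁ 1)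

variable [HasFiniteBiproducts C]

/-- An exceptional object in a `K`-linear triangulated category:
`Hom(E, E) ≅ K` and `Hom(E, E[n]) = 0` for `n ≠ 0`. -/
def IsExceptional (K : Type*) [Field K] [Linear K C] (E : C) : Prop :=
  (¬ IsZero E) ∧ (∀ f : E ⟶ E, ∃ a : K, f = a • 𝟙 E) ∧
  (∀ n : ℤ, n ≠ 0 → ∀ f : E ⟶ E⟦n⟧, f = 0)

/-- The objects isomorphic to finite direct sums of shifts `⊕_ℓ E^{b_ℓ}[ℓ]` of `E`. -/
def sumShifts (E : C) : Set C :=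
  {X | ∃ (m : ℕ) (k : Fin m → ℤ), Nonempty (X ≅ ⨁ (fun j => E⟦k j⟧))}

/-- The objects isomorphic to finite direct sums `⊕_{ℓ ≥ 0} E^{b_ℓ}[ℓ]` of non-negative
shifts of `E`. -/
def sumShiftsNonneg (E : C) : Set C :=
  {X | ∃ (m : ℕ) (k : Fin m → ℤ), (∀ j, 0 ≤ k j) ∧ Nonempty (X ≅ ⨁ (fun j => E⟦k j⟧))}

/-- The objects isomorphic to finite direct sums `E^{⊕ b}` of copies of `E`. -/
def sumCopies (E : C) : Set C :=
  {X | ∃ b : ℕ, Nonempty (X ≅ ⨁ (fun _ : Fin b => E))}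

set_option linter.unusedSectionVars false

section Helpers

open scoped ZeroObject

section Exact
variable {X Y Z W : C} {f : X ⟶ Y} {g : Y ⟶ Z} {h : Z ⟶ X⟦(1 : ℤ)⟧}

lemma ex2 (hT : Triangle.mk f g h ∈ distTriang C) (w : W ⟶ Y) (hw : w ≫ g = 0) :
    ∃ v : W ⟶ X, w = v ≫ f := Triangle.coyoneda_exact₂ _ hT w hw

lemma ex3 (hT : Triangle.mk f g h ∈ distTriang C) (w : W ⟶ Z) (hw : w ≫ h = 0) :
    ∃ v : W ⟶ Y, w = v ≫ g := Triangle.coyoneda_exact₃ _ hT w hw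

lemma ex1 (hT : Triangle.mk f g h ∈ distTriang C) (w : W ⟶ X⟦(1 : ℤ)⟧)
    (hw : w ≫ f⟦(1 : ℤ)⟧' = 0) :
    ∃ v : W ⟶ Z, w = v ≫ h := Triangle.coyoneda_exact₁ _ hT w hw

lemma ex2s (hT : Triangle.mk f g h ∈ distTriang C) (w : W ⟶ Y⟦(1 : ℤ)⟧)
    (hw : w ≫ g⟦(1 : ℤ)⟧' = 0) :
    ∃ v : W ⟶ X⟦(1 : ℤ)⟧, w = v ≫ f⟦(1 : ℤ)⟧' := by
  obtain ⟨v, hv⟩ : ∃ v : W ⟶ X⟦(1 : ℤ)⟧, w = v ≫ (-(f⟦(1 : ℤ)⟧')) :=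
    Triangle.coyoneda_exact₂ _ (rot_of_distTriang _ (rot_of_distTriang _
    (rot_of_distTriang _ hT))) w (by
      change w ≫ (-(g⟦(1 : ℤ)⟧')) = 0
      rw [Preadditive.comp_neg, hw, neg_zero])
  exact ⟨-v, by rw [hv]; simp⟩

lemma yo2 (hT : Triangle.mk f g h ∈ distTriang C) (w : Y ⟶ W) (hw : f ≫ w = 0) :
    ∃ v : Z ⟶ W, w = g ≫ v := Triangle.yoneda_exact₂ _ hT w hw

lemma yo3 (hT : Triangle.mk f g h ∈ distTriang C) (w : Z ⟶ W) (hw : g ≫ w = 0) :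
    ∃ v : X⟦(1 : ℤ)⟧ ⟶ W, w = h ≫ v := Triangle.yoneda_exact₃ _ hT w hw

lemma yo1s (hT : Triangle.mk f g h ∈ distTriang C) (w : X⟦(1 : ℤ)⟧ ⟶ W) (hw : h ≫ w = 0) :
    ∃ v : Y⟦(1 : ℤ)⟧ ⟶ W, w = f⟦(1 : ℤ)⟧' ≫ v := by
  obtain ⟨v, hv⟩ : ∃ v : Y⟦(1 : ℤ)⟧ ⟶ W, w = (-(f⟦(1 : ℤ)⟧')) ≫ v :=
    Triangle.yoneda_exact₃ _ (rot_of_distTriang _ hT) w hw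
  exact ⟨-v, by rw [hv]; simp⟩

lemma yo2s (hT : Triangle.mk f g h ∈ distTriang C) (w : Y⟦(1 : ℤ)⟧ ⟶ W)
    (hw : f⟦(1 : ℤ)⟧' ≫ w = 0) :
    ∃ v : Z⟦(1 : ℤ)⟧ ⟶ W, w = g⟦(1 : ℤ)⟧' ≫ v := by
  obtain ⟨v, hv⟩ : ∃ v : Z⟦(1 : ℤ)⟧ ⟶ W, w = (-(g⟦(1 : ℤ)⟧')) ≫ v :=
    Triangle.yoneda_exact₃ _ (rot_of_distTriang _ (rot_of_distTriang _ hT)) w (by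
    change (-(f⟦(1 : ℤ)⟧')) ≫ w = 0
    rw [Preadditive.neg_comp, hw, neg_zero])
  exact ⟨-v, by rw [hv]; simp⟩

lemma yo1 (hT : Triangle.mk f g h ∈ distTriang C) (w : X ⟶ W) (hw : h ≫ w⟦(1 : ℤ)⟧' = 0) :
    ∃ v : Y ⟶ W, w = f ≫ v := by
  obtain ⟨v, hv⟩ := yo1s hT _ hw
  refine ⟨(shiftFunctor C (1 : ℤ)).preimage v, (shiftFunctor C (1 : ℤ)).map_injective ?_⟩
  simpa using hv

lemma z12 (hT : Triangle.mk f g h ∈ distTriang C) : f ≫ g = 0 :=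
  comp_distTriang_mor_zero₁₂ _ hT
lemma z23 (hT : Triangle.mk f g h ∈ distTriang C) : g ≫ h = 0 :=
  comp_distTriang_mor_zero₂₃ _ hT
lemma z31 (hT : Triangle.mk f g h ∈ distTriang C) : h ≫ f⟦(1 : ℤ)⟧' = 0 :=
  comp_distTriang_mor_zero₃₁ _ hT

end Exact

/-- Hom vanishing along shifts. -/
lemma hom_shift_zero {X Y : C} (n : ℤ) (h : ∀ f : X ⟶ Y, f = 0) (f : X⟦n⟧ ⟶ Y⟦n⟧) : f = 0 := by
  rw [← (shiftFunctor C n).map_preimage f, h ((shiftFunctor C n).preimage f), Functor.map_zero]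

lemma hom_iso_zero {X Y X' Y' : C} (e : X ≅ X') (e' : Y ≅ Y') (h : ∀ f : X ⟶ Y, f = 0)
    (f : X' ⟶ Y') : f = 0 := by
  have := h (e.hom ≫ f ≫ e'.inv)
  have h2 : f = e.inv ≫ (e.hom ≫ f ≫ e'.inv) ≫ e'.hom := by simp
  rw [h2, this]; simp

lemma star_iso {S₁ S₂ : Set C} {X Y : C} (e : X ≅ Y) (hX : X ∈ star S₂ S₁) : Y ∈ star S₂ S₁ := by
  obtain ⟨A, hA, B, hB, f, g, h, hT⟩ := hX
  refine ⟨A, hA, B, hB, f ≫ e.hom, e.inv ≫ g, h, isomorphic_distinguished _ hT _ ?_⟩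
  exact Triangle.isoMk _ _ (Iso.refl _) e.symm (Iso.refl _)
    (by simp [Triangle.mk]) (by simp [Triangle.mk]) (by simp [Triangle.mk])

lemma tri_shift {X Y Z : C} {f : X ⟶ Y} {g : Y ⟶ Z} {h : Z ⟶ X⟦(1 : ℤ)⟧}
    (hT : Triangle.mk f g h ∈ distTriang C) (n : ℤ) :
    ∃ (f' : X⟦n⟧ ⟶ Y⟦n⟧) (g' : Y⟦n⟧ ⟶ Z⟦n⟧) (h' : Z⟦n⟧ ⟶ X⟦n⟧⟦(1 : ℤ)⟧),
      Triangle.mk f' g' h' ∈ distTriang C :=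
  ⟨_, _, _, Triangle.shift_distinguished _ hT n⟩

theorem star_ext {S₁ S₂ : Set C} (h₁ : IsTriangulatedSub S₁) (h₂ : IsTriangulatedSub S₂)
    (orth : ∀ X ∈ S₂, ∀ Y ∈ S₁, ∀ f : X ⟶ Y, f = 0)
    {X Y Z : C} {s : X ⟶ Y} {t : Y ⟶ Z} {w : Z ⟶ X⟦(1 : ℤ)⟧}
    (hT : Triangle.mk s t w ∈ distTriang C) (hX : X ∈ star S₂ S₁) (hZ : Z ∈ star S₂ S₁) :
    Y ∈ star S₂ S₁ := by
  obtain ⟨AX, hAX, BX, hBX, fX, gX, kX, hTX⟩ := hX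
  obtain ⟨AZ, hAZ, BZ, hBZ, fZ, gZ, kZ, hTZ⟩ := hZ
  have hBX1 : BX⟦(1 : ℤ)⟧ ∈ S₁ := h₁.shift 1 _ hBX
  obtain ⟨a, ha⟩ : ∃ a : AZ ⟶ AX⟦(1 : ℤ)⟧, fZ ≫ w = a ≫ fX⟦(1 : ℤ)⟧' := by
    obtain ⟨f', g', h', hT'⟩ := tri_shift hTX 1
    exact ex2s hTX (fZ ≫ w) (orth _ hAZ _ hBX1 _)
  obtain ⟨b, hb⟩ : ∃ b : BZ ⟶ BX⟦(1 : ℤ)⟧, w ≫ gX⟦(1 : ℤ)⟧' = gZ ≫ b := by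
    exact yo2 hTZ _ (orth _ hAZ _ hBX1 _)
  obtain ⟨AY, i, p, hTA⟩ := distinguished_cocone_triangle₂ a
  obtain ⟨BY, j, r, hTB⟩ := distinguished_cocone_triangle₂ b
  have hAY : AY ∈ S₂ := h₂.ext₂ _ hTA hAX hAZ
  have hBY : BY ∈ S₁ := h₁.ext₂ _ hTB hBX hBZ
  obtain ⟨α, hα₁, hα₂⟩ : ∃ α : AY ⟶ Y, i ≫ α = fX ≫ s ∧ p ≫ fZ = α ≫ t :=
    complete_distinguished_triangle_morphism₂ _ _ hTA hT fX fZ ha.symm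
  obtain ⟨β, hβ₁, hβ₂⟩ : ∃ β : Y ⟶ BY, s ≫ β = gX ≫ j ∧ t ≫ gZ = β ≫ r :=
    complete_distinguished_triangle_morphism₂ _ _ hT hTB gX gZ hb
  obtain ⟨D, q, δ, hTC⟩ := distinguished_cocone_triangle α
  -- injectivity tools
  have inj : ∀ {A V B : C} {f : A ⟶ V} {g : V ⟶ B} {k : B ⟶ A⟦(1 : ℤ)⟧},
      Triangle.mk f g k ∈ distTriang C → B ∈ S₁ → ∀ W ∈ S₂, ∀ d : W ⟶ A⟦(1 : ℤ)⟧,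
      d ≫ f⟦(1 : ℤ)⟧' = 0 → d = 0 := by
    intro A V B f g k hT hB W hW d hd
    obtain ⟨v, rfl⟩ := ex1 hT d hd
    rw [orth W hW B hB v, zero_comp]
  have hD : D ∈ rOrth S₂ := by
    intro W hW c
    -- first, the composition with `δ` vanishes
    have hd : c ≫ δ = 0 := by
      have e1 : (c ≫ δ) ≫ α⟦(1 : ℤ)⟧' = 0 := by rw [assoc, z31 hTC, comp_zero]
      have e2 : (c ≫ δ) ≫ p⟦(1 : ℤ)⟧' = 0 := by
        apply inj hTZ hBZ W hW
        rw [assoc, ← Functor.map_comp, hα₂, Functor.map_comp, ← assoc, e1, zero_comp]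
      obtain ⟨x, hx⟩ := ex2s hTA _ e2
      have e3 : (x ≫ fX⟦(1 : ℤ)⟧') ≫ s⟦(1 : ℤ)⟧' = 0 := by
        rw [assoc, ← Functor.map_comp, ← hα₁, Functor.map_comp, ← assoc, ← hx, e1]
      obtain ⟨z, hz⟩ := ex1 hT _ e3
      obtain ⟨z', rfl⟩ := ex2 hTZ z (orth _ hW _ hBZ _)
      have e4 : x - z' ≫ a = 0 := by
        apply inj hTX hBX W hW
        rw [Preadditive.sub_comp, hz, assoc, assoc, ha, sub_self]
      rw [hx, sub_eq_zero.1 e4, assoc, z31 hTA, comp_zero]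
    obtain ⟨y, rfl⟩ := ex3 hTC c hd
    obtain ⟨z', hz'⟩ := ex2 hTZ (y ≫ t) (orth _ hW _ hBZ _)
    have e1 : z' ≫ a = 0 := by
      apply inj hTX hBX W hW
      rw [assoc, ← ha, ← assoc, ← hz', assoc, z23 hT, comp_zero]
    obtain ⟨y1, rfl⟩ := ex3 hTA z' e1
    obtain ⟨x, hx⟩ := ex2 hT (y - y1 ≫ α) (by
      rw [Preadditive.sub_comp, hz', assoc, assoc, hα₂, sub_self])
    obtain ⟨x', rfl⟩ := ex2 hTX x (orth _ hW _ hBX _)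
    have e2 : y = (y1 + x' ≫ i) ≫ α := by
      rw [Preadditive.add_comp, assoc, hα₁, ← assoc, ← hx]; abel
    rw [e2, assoc, z12 hTC, comp_zero]
  have hBYo : BY ∈ rOrth S₂ := fun W hW c => orth W hW _ hBY c
  have kill : ∀ {A V B : C} {f : A ⟶ V} {g : V ⟶ B} {k : B ⟶ A⟦(1 : ℤ)⟧},
      Triangle.mk f g k ∈ distTriang C → A ∈ S₂ → ∀ U ∈ rOrth S₂, ∀ d : B ⟶ U,
      g ≫ d = 0 → d = 0 := by
    intro A V B f g k hT hA U hU d hd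
    obtain ⟨v, rfl⟩ := yo3 hT d hd
    rw [hU _ (h₂.shift 1 _ hA) v, comp_zero]
  have surj : ∀ U ∈ rOrth S₂, ∀ u : Y ⟶ U, ∃ v : BY ⟶ U, u = β ≫ v := by
    intro U hU u
    obtain ⟨u', hu'⟩ := yo2 hTX (s ≫ u) (hU _ hAX _)
    have e1 : b ≫ u'⟦(1 : ℤ)⟧' = 0 := by
      obtain ⟨x, hx⟩ := yo3 hTZ (b ≫ u'⟦(1 : ℤ)⟧') (by
        rw [← assoc, ← hb, assoc, ← Functor.map_comp, ← hu', Functor.map_comp, ← assoc,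
          z31 hT, zero_comp])
      rw [hx, hom_shift_zero 1 (hU _ hAZ) x, comp_zero]
    obtain ⟨u1, rfl⟩ := yo1 hTB u' e1
    obtain ⟨v, hv⟩ := yo2 hT (u - β ≫ u1) (by
      rw [Preadditive.comp_sub, hu', ← assoc, ← assoc, hβ₁, sub_self])
    obtain ⟨v', rfl⟩ := yo2 hTZ v (hU _ hAZ _)
    refine ⟨u1 + r ≫ v', ?_⟩
    rw [Preadditive.comp_add, ← assoc, ← hβ₂, assoc, ← hv]; abel
  have injB : ∀ U ∈ rOrth S₂, ∀ u : BY ⟶ U, β ≫ u = 0 → u = 0 := by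
    intro U hU u hu
    have e1 : j ≫ u = 0 := kill hTX hAX U hU _ (by
      rw [← assoc, ← hβ₁, assoc, hu, comp_zero])
    obtain ⟨v, rfl⟩ := yo2 hTB u e1
    obtain ⟨x, hx⟩ := yo3 hT (gZ ≫ v) (by rw [← assoc, hβ₂, assoc, hu])
    obtain ⟨x', rfl⟩ := yo2s hTX x (hU _ (h₂.shift 1 _ hAX) _)
    have e2 : v - b ≫ x' = 0 := kill hTZ hAZ U hU _ (by
      rw [Preadditive.comp_sub, hx, ← assoc, ← assoc, hb, sub_self])
    rw [sub_eq_zero.1 e2, ← assoc, z23 hTB, zero_comp]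
  obtain ⟨γ, hγ⟩ := yo2 hTC β (orth _ hAY _ hBY _)
  obtain ⟨ε, hε⟩ := surj D hD q
  have i1 : γ ≫ ε - 𝟙 D = 0 := kill hTC hAY D hD _ (by
    rw [Preadditive.comp_sub, ← assoc, ← hγ, ← hε, comp_id, sub_self])
  have i2 : ε ≫ γ - 𝟙 BY = 0 := injB BY hBYo _ (by
    rw [Preadditive.comp_sub, ← assoc, ← hε, ← hγ, comp_id, sub_self])
  have hDS : D ∈ S₁ := h₁.isoClosed
    (⟨ε, γ, sub_eq_zero.1 i2, sub_eq_zero.1 i1⟩ : BY ≅ D) hBY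
  exact ⟨AY, hAY, D, hDS, α, q, δ, hTC⟩

theorem star_sub {S₁ S₂ : Set C} (h₁ : IsTriangulatedSub S₁) (h₂ : IsTriangulatedSub S₂)
    (orth : ∀ X ∈ S₂, ∀ Y ∈ S₁, ∀ f : X ⟶ Y, f = 0) : IsTriangulatedSub (star S₂ S₁) where
  zero := fun X hX => ⟨X, h₂.zero X hX, 0, h₁.zero _ (isZero_zero C), 𝟙 X, 0, 0,
    contractible_distinguished X⟩
  isoClosed := star_iso
  shift := by
    rintro n X ⟨A, hA, B, hB, f, g, k, hT⟩
    obtain ⟨f', g', k', hT'⟩ := tri_shift hT n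
    exact ⟨_, h₂.shift n _ hA, _, h₁.shift n _ hB, f', g', k', hT'⟩
  ext₂ := fun T hT hX hZ => star_ext h₁ h₂ orth (s := T.mor₁) (t := T.mor₂) (w := T.mor₃) hT hX hZ

lemma left_mem_star {S₁ S₂ : Set C} (h0 : ∀ X : C, IsZero X → X ∈ S₁) {X : C} (hX : X ∈ S₂) :
    X ∈ star S₂ S₁ :=
  ⟨X, hX, 0, h0 _ (isZero_zero C), 𝟙 X, 0, 0, contractible_distinguished X⟩

lemma right_mem_star {S₁ S₂ : Set C} (h0 : ∀ X : C, IsZero X → X ∈ S₂) {X : C} (hX : X ∈ S₁) :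
    X ∈ star S₂ S₁ :=
  ⟨0, h0 _ (isZero_zero C), X, hX, 0, 𝟙 X, 0, contractible_distinguished₁ X⟩

lemma hom_star_zero {S₁ S₂ S₁' S₂' : Set C} {X Y : C} (hX : X ∈ star S₂ S₁)
    (hY : Y ∈ star S₂' S₁')
    (h22 : ∀ A ∈ S₂, ∀ B ∈ S₂', ∀ f : A ⟶ B, f = 0) (h21 : ∀ A ∈ S₂, ∀ B ∈ S₁', ∀ f : A ⟶ B, f = 0)
    (h12 : ∀ A ∈ S₁, ∀ B ∈ S₂', ∀ f : A ⟶ B, f = 0) (h11 : ∀ A ∈ S₁, ∀ B ∈ S₁', ∀ f : A ⟶ B, f = 0)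
    (f : X ⟶ Y) : f = 0 := by
  obtain ⟨A, hA, B, hB, i, p, k, hT⟩ := hX
  obtain ⟨A', hA', B', hB', i', p', k', hT'⟩ := hY
  have to0 : ∀ {W : C} (u : W ⟶ Y), (∀ f : W ⟶ A', f = 0) → (∀ f : W ⟶ B', f = 0) → u = 0 := by
    intro W u h1 h2
    obtain ⟨v, rfl⟩ := ex2 hT' u (h2 _)
    rw [h1 v, zero_comp]
  obtain ⟨v, rfl⟩ := yo2 hT f (to0 _ (h22 A hA A' hA') (h21 A hA B' hB'))
  rw [to0 v (h12 B hB A' hA') (h11 B hB B' hB'), comp_zero]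

/-- The class of objects that are sums of `n` shifts `E⟦k⟧` with `p k`. -/
inductive SS (p : ℤ → Prop) (E : C) : ℕ → C → Prop
  | zero (X : C) (hX : IsZero X) : SS p E 0 X
  | succ (n : ℕ) (k : ℤ) (X Y : C) (hk : p k) (hY : SS p E n Y) (e : X ≅ E⟦k⟧ ⊞ Y) :
      SS p E (n + 1) X

/-- Splitting off the first summand of a finite biproduct. -/
noncomputable def biproductFinSucc {n : ℕ} (F : Fin (n + 1) → C) :
    (⨁ F) ≅ F 0 ⊞ ⨁ (fun j : Fin n => F j.succ) where
  hom := biprod.lift (biproduct.π F 0) (biproduct.lift fun j => biproduct.π F j.succ)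
  inv := biprod.desc (biproduct.ι F 0) (biproduct.desc fun j => biproduct.ι F j.succ)
  hom_inv_id := by
    rw [biprod.lift_desc, biproduct.lift_desc, ← Fin.sum_univ_succ
      (f := fun j => biproduct.π F j ≫ biproduct.ι F j), biproduct.total]
  inv_hom_id := by
    ext i j
    · simp
    · simp [biproduct.ι_π_ne _ (Fin.succ_ne_zero i).symm]
    · simp [biproduct.ι_π_ne _ (Fin.succ_ne_zero _)]
    · by_cases h : i = j
      · subst h; simp
      · simp [biproduct.ι_π_ne _ h, biproduct.ι_π_ne _ (fun h' => h (Fin.succ_injective _ h'))]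

lemma SS.iso {p : ℤ → Prop} {E : C} {n : ℕ} {X Y : C} (hX : SS p E n X) (e : X ≅ Y) :
    SS p E n Y := by
  cases hX with
  | zero _ hX => exact .zero _ (hX.of_iso e.symm)
  | succ n k _ Z hk hZ e' => exact .succ n k _ Z hk hZ (e.symm ≪≫ e')

lemma ss_of_biproduct {p : ℤ → Prop} {E : C} {n : ℕ} (k : Fin n → ℤ) (hk : ∀ j, p (k j)) :
    SS p E n (⨁ fun j => E⟦k j⟧) := by
  induction n with
  | zero =>
    refine .zero _ ?_
    rw [IsZero.iff_id_eq_zero]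
    ext j
    exact j.elim0
  | succ n ih =>
    exact .succ n (k 0) _ _ (hk 0) (ih (fun j => k j.succ) fun j => hk _)
      (biproductFinSucc fun j => E⟦k j⟧)

lemma SS.to_biproduct {p : ℤ → Prop} {E : C} {n : ℕ} {X : C} (h : SS p E n X) :
    ∃ k : Fin n → ℤ, (∀ j, p (k j)) ∧ Nonempty (X ≅ ⨁ fun j => E⟦k j⟧) := by
  induction h with
  | zero X hX =>
    refine ⟨fun _ => 0, fun j => j.elim0, ⟨hX.iso ?_⟩⟩
    rw [IsZero.iff_id_eq_zero]
    ext j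
    exact j.elim0
  | succ n k X Y hk hY e ih =>
    obtain ⟨k', hk', ⟨e'⟩⟩ := ih
    refine ⟨Fin.cons k k', fun j => ?_, ⟨e ≪≫ biprod.mapIso (Iso.refl _) e' ≪≫
      (biproductFinSucc fun j => E⟦(Fin.cons k k' : Fin (n + 1) → ℤ) j⟧).symm⟩⟩
    refine Fin.cases hk hk' j

lemma SS.mono {p q : ℤ → Prop} {E : C} {n : ℕ} {X : C} (h : SS p E n X) (hpq : ∀ k, p k → q k) :
    SS q E n X := by
  induction h with
  | zero X hX => exact .zero _ hX
  | succ n k X Y hk hY e ih => exact .succ n k X Y (hpq k hk) ih e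

/-- The shift of a biproduct. -/
noncomputable def shiftBiprod (X Y : C) (m : ℤ) : (X ⊞ Y)⟦m⟧ ≅ X⟦m⟧ ⊞ Y⟦m⟧ where
  hom := biprod.lift (biprod.fst⟦m⟧') (biprod.snd⟦m⟧')
  inv := biprod.desc (biprod.inl⟦m⟧') (biprod.inr⟦m⟧')
  hom_inv_id := by
    rw [biprod.lift_desc, ← Functor.map_comp, ← Functor.map_comp, ← Functor.map_add,
      biprod.total, CategoryTheory.Functor.map_id]
  inv_hom_id := by
    ext <;> simp [← Functor.map_comp]

/-- Composition of shifts. -/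
noncomputable def shAdd (X : C) {a b c : ℤ} (h : a + b = c) : X⟦a⟧⟦b⟧ ≅ X⟦c⟧ :=
  ((shiftFunctorAdd' C a b c h).app X).symm

lemma SS.shift {p q : ℤ → Prop} {E : C} {n : ℕ} {X : C} (h : SS p E n X) (m : ℤ)
    (hpq : ∀ k, p k → q (k + m)) : SS q E n (X⟦m⟧) := by
  induction h with
  | zero X hX => exact .zero _ ((shiftFunctor C m).map_isZero hX)
  | succ n k X Y hk hY e ih =>
    exact .succ n (k + m) _ _ (hpq k hk) ih ((shiftFunctor C m).mapIso e ≪≫ shiftBiprod _ _ _ ≪≫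
      biprod.mapIso (shAdd E rfl) (Iso.refl _))

lemma SS.cons {p : ℤ → Prop} {E : C} {n : ℕ} {X : C} (h : SS p E n X) {k : ℤ} (hk : p k) :
    SS p E (n + 1) (E⟦k⟧ ⊞ X) := .succ n k _ _ hk h (Iso.refl _)

lemma SS.add {p : ℤ → Prop} {E : C} {n m : ℕ} {X Y : C} (h : SS p E n X) (h' : SS p E m Y) :
    ∃ l, SS p E l (X ⊞ Y) := by
  induction h with
  | zero X hX => exact ⟨m, h'.iso (isoZeroBiprod hX)⟩
  | succ n k X Z hk hY e ih =>
    obtain ⟨l, hl⟩ := ih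
    exact ⟨l + 1, (hl.cons hk).iso ((biprod.associator _ _ _).symm ≪≫
      biprod.mapIso e.symm (Iso.refl _))⟩

lemma SS.hom_zero {p q : ℤ → Prop} {E F : C} {n m : ℕ} {X Y : C} (h : SS p E n X)
    (h' : SS q F m Y) (hpq : ∀ k l, p k → q l → ∀ f : E⟦k⟧ ⟶ F⟦l⟧, f = 0) (f : X ⟶ Y) :
    f = 0 := by
  have key : ∀ k, p k → ∀ f : E⟦k⟧ ⟶ Y, f = 0 := by
    clear f
    intro k hk
    induction h' with
    | zero Y hY => exact fun f => hY.eq_of_tgt _ _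
    | succ n l Y Z hl hZ e ih =>
      apply hom_iso_zero (Iso.refl _) e.symm
      intro f
      ext
      · rw [hpq k l hk hl (f ≫ biprod.fst), zero_comp]
      · rw [ih (f ≫ biprod.snd), zero_comp]
  induction h with
  | zero X hX => exact hX.eq_of_src _ _
  | succ n k X Z hk hZ e ih =>
    revert f
    apply hom_iso_zero e.symm (Iso.refl _)
    intro f
    ext
    · rw [key k hk (biprod.inl ≫ f), comp_zero]
    · rw [ih (biprod.inr ≫ f), comp_zero]

lemma shift_not_isZero {E : C} (hE : ¬ IsZero E) (k : ℤ) : ¬ IsZero (E⟦k⟧) := by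
  intro h
  apply hE
  exact ((shiftFunctor C (-k)).map_isZero h).of_iso (shiftShiftNeg E k).symm

lemma SS.restrict {p q : ℤ → Prop} {E : C} (hE : ¬ IsZero E) {n : ℕ} {X : C} (h : SS p E n X)
    (hq : ∀ k, p k → ¬ q k → ∀ f : E⟦k⟧ ⟶ X, f = 0) : SS q E n X := by
  induction h with
  | zero X hX => exact .zero _ hX
  | succ n k X Y hk hY e ih =>
    refine .succ n k X Y ?_ (ih ?_) e
    · by_contra hqk
      apply shift_not_isZero hE k
      rw [IsZero.iff_id_eq_zero]
      have := hq k hk hqk (biprod.inl ≫ e.inv)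
      calc 𝟙 (E⟦k⟧) = (biprod.inl ≫ e.inv) ≫ e.hom ≫ biprod.fst := by simp
        _ = 0 := by rw [this, zero_comp]
    · intro l hl hql f
      have := hq l hl hql (f ≫ biprod.inr ≫ e.inv)
      calc f = (f ≫ biprod.inr ≫ e.inv) ≫ e.hom ≫ biprod.snd := by simp
        _ = 0 := by rw [this, zero_comp]

lemma SS.split {p : ℤ → Prop} {E : C} {n : ℕ} {X : C} (h : SS p E n X) (q : ℤ → Prop) :
    ∃ (A B : C) (a b : ℕ), SS (fun k => p k ∧ q k) E a A ∧ SS (fun k => p k ∧ ¬ q k) E b B ∧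
      Nonempty (X ≅ A ⊞ B) := by
  induction h with
  | zero X hX => exact ⟨X, X, 0, 0, .zero _ hX, .zero _ hX, ⟨isoZeroBiprod hX⟩⟩
  | succ n k X Y hk hY e ih =>
    obtain ⟨A, B, a, b, hA, hB, ⟨e'⟩⟩ := ih
    by_cases hqk : q k
    · exact ⟨_, B, _, b, hA.cons ⟨hk, hqk⟩, hB, ⟨e ≪≫ biprod.mapIso (Iso.refl _) e' ≪≫
        (biprod.associator _ _ _).symm⟩⟩
    · exact ⟨A, _, a, _, hA, hB.cons ⟨hk, hqk⟩, ⟨e ≪≫ biprod.mapIso (Iso.refl _) e' ≪≫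
        (biprod.associator _ _ _).symm ≪≫ biprod.mapIso (biprod.braiding _ _) (Iso.refl _) ≪≫
        biprod.associator _ _ _⟩⟩

/-- Exchange of two summands. -/
noncomputable def swap₃ (P Q R : C) : P ⊞ (Q ⊞ R) ≅ Q ⊞ (P ⊞ R) where
  hom := biprod.desc (biprod.inl ≫ biprod.inr) (biprod.desc biprod.inl (biprod.inr ≫ biprod.inr))
  inv := biprod.desc (biprod.inl ≫ biprod.inr) (biprod.desc biprod.inl (biprod.inr ≫ biprod.inr))

lemma SS.extract_src {p : ℤ → Prop} {E : C} {n : ℕ} {X : C} (h : SS p E n X) {W : C}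
    (u : X ⟶ W) (hu : u ≠ 0) :
    ∃ (m : ℕ) (k : ℤ) (Y : C) (e : X ≅ E⟦k⟧ ⊞ Y), n = m + 1 ∧ SS p E m Y ∧ p k ∧
      biprod.inl ≫ e.inv ≫ u ≠ 0 := by
  induction h with
  | zero X hX => exact (hu (hX.eq_of_src _ _)).elim
  | succ n k X Y hk hY e ih =>
    by_cases h0 : biprod.inl ≫ e.inv ≫ u = 0
    · have h1 : biprod.inr ≫ e.inv ≫ u ≠ 0 := by
        intro h1
        apply hu
        rw [← cancel_epi e.inv, comp_zero]
        ext
        · rw [h0, comp_zero]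
        · rw [h1, comp_zero]
      obtain ⟨m, l, Z, e', rfl, hZ, hl, hne⟩ := ih _ h1
      refine ⟨m + 1, l, _, e ≪≫ biprod.mapIso (Iso.refl _) e' ≪≫ swap₃ _ _ _, rfl,
        hZ.cons hk, hl, ?_⟩
      convert hne using 1
      simp [swap₃]
    · exact ⟨n, k, Y, e, rfl, hY, hk, h0⟩

lemma SS.extract_tgt {p : ℤ → Prop} {E : C} {n : ℕ} {X : C} (h : SS p E n X) {W : C}
    (u : W ⟶ X) (hu : u ≠ 0) :
    ∃ (m : ℕ) (k : ℤ) (Y : C) (e : X ≅ E⟦k⟧ ⊞ Y), n = m + 1 ∧ SS p E m Y ∧ p k ∧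
      u ≫ e.hom ≫ biprod.fst ≠ 0 := by
  induction h with
  | zero X hX => exact (hu (hX.eq_of_tgt _ _)).elim
  | succ n k X Y hk hY e ih =>
    by_cases h0 : u ≫ e.hom ≫ biprod.fst = 0
    · have h1 : u ≫ e.hom ≫ biprod.snd ≠ 0 := by
        intro h1
        apply hu
        rw [← cancel_mono e.hom, zero_comp]
        ext
        · rw [assoc, h0, zero_comp]
        · rw [assoc, h1, zero_comp]
      obtain ⟨m, l, Z, e', rfl, hZ, hl, hne⟩ := ih _ h1
      refine ⟨m + 1, l, _, e ≪≫ biprod.mapIso (Iso.refl _) e' ≪≫ swap₃ _ _ _, rfl,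
        hZ.cons hk, hl, ?_⟩
      convert hne using 1
      have : (swap₃ (E⟦k⟧) (E⟦l⟧) Z).hom ≫ biprod.fst = biprod.snd ≫ biprod.fst := by
        ext <;> simp [swap₃]
      simp [this]
    · exact ⟨n, k, Y, e, rfl, hY, hk, h0⟩

/-- Binary biproducts and products over `WalkingPair`. -/
noncomputable def biprodPi (F : WalkingPair → C) : F .left ⊞ F .right ≅ ∏ᶜ F where
  hom := Pi.lift (fun j => match j with
    | .left => biprod.fst
    | .right => biprod.snd)
  inv := biprod.lift (Pi.π F .left) (Pi.π F .right)
  hom_inv_id := by ext <;> simp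
  inv_hom_id := by
    apply Pi.hom_ext
    rintro (_ | _) <;> simp

lemma biprodPi_nat {F G : WalkingPair → C} (φ : ∀ j, F j ⟶ G j) :
    biprod.map (φ .left) (φ .right) ≫ (biprodPi G).hom = (biprodPi F).hom ≫ Limits.Pi.map φ := by
  apply Pi.hom_ext
  rintro (_ | _) <;> simp [biprodPi]

lemma cone_sum' {U V P Q Z₁ Z₂ D : C} {u : U ⟶ P} {g₁ : P ⟶ Z₁} {h₁ : Z₁ ⟶ U⟦(1 : ℤ)⟧}
    (hT₁ : Triangle.mk u g₁ h₁ ∈ distTriang C)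
    {v : V ⟶ Q} {g₂ : Q ⟶ Z₂} {h₂ : Z₂ ⟶ V⟦(1 : ℤ)⟧}
    (hT₂ : Triangle.mk v g₂ h₂ ∈ distTriang C)
    {X Y : C} {w : X ⟶ Y} {g : Y ⟶ D} {h : D ⟶ X⟦(1 : ℤ)⟧}
    (hT : Triangle.mk w g h ∈ distTriang C) (eX : X ≅ U ⊞ V) (eY : Y ≅ P ⊞ Q)
    (comm : w ≫ eY.hom = eX.hom ≫ biprod.map u v) : Nonempty (D ≅ Z₁ ⊞ Z₂) := by
  let T : WalkingPair → Triangle C := fun j => match j with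
    | .left => Triangle.mk u g₁ h₁
    | .right => Triangle.mk v g₂ h₂
  have hP := productTriangle_distinguished T (by rintro (_ | _) <;> assumption)
  let e := isoTriangleOfIso₁₂ _ _ hT hP (eX ≪≫ biprodPi (fun j => (T j).obj₁))
    (eY ≪≫ biprodPi (fun j => (T j).obj₂)) (by
      have := biprodPi_nat (fun j => (T j).mor₁)
      change w ≫ eY.hom ≫ _ = (eX.hom ≫ _) ≫ _
      rw [← assoc, comm, assoc, assoc]
      congr 1)
  exact ⟨Triangle.π₃.mapIso e ≪≫ (biprodPi (fun j => (T j).obj₃)).symm⟩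

lemma SS.cone {E : C} (hE : ∀ (k l : ℤ) (f : E⟦k⟧ ⟶ E⟦l⟧), f ≠ 0 → IsIso f) :
    ∀ (n m : ℕ) (X Y D : C) (w : X ⟶ Y) (g : Y ⟶ D) (h : D ⟶ X⟦(1 : ℤ)⟧),
      Triangle.mk w g h ∈ distTriang C → SS (fun _ => True) E n X → SS (fun _ => True) E m Y →
      ∃ l, SS (fun _ => True) E l D := by
  intro n
  induction n with
  | zero =>
    intro m X Y D w g h hT hX hY
    cases hX with
    | zero _ hX =>
    have : IsIso g := (Triangle.isZero₁_iff_isIso₂ _ hT).1 hX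
    exact ⟨m, hY.iso (asIso g)⟩
  | succ n ih =>
    intro m X Y D w g h hT hX hY
    by_cases hw : w = 0
    · obtain ⟨e, -⟩ := exists_iso_binaryBiproduct_of_distTriang _ (rot_of_distTriang _ hT) (by
        change -(w⟦(1 : ℤ)⟧') = 0
        rw [hw]; simp)
      obtain ⟨l, hl⟩ := hY.add (hX.shift 1 (fun _ _ => trivial))
      exact ⟨l, hl.iso e.symm⟩
    · obtain ⟨n', k, X', e, hn, hX', -, hne⟩ := hX.extract_src w hw
      obtain ⟨m', k', Y', e', rfl, hY', -, hne'⟩ := hY.extract_tgt _ hne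
      obtain rfl : n = n' := by omega
      let f := e.inv ≫ w ≫ e'.hom
      have : IsIso (biprod.inl ≫ f ≫ biprod.fst) := hE _ _ _ (by simpa [f] using hne')
      obtain ⟨L, R, v, hv⟩ := Biprod.gaussian f
      obtain ⟨Z₁, g₁, h₁, hT₁⟩ := distinguished_cocone_triangle (biprod.inl ≫ f ≫ biprod.fst)
      obtain ⟨Z₂, g₂, h₂, hT₂⟩ := distinguished_cocone_triangle v
      obtain ⟨l, hl⟩ := ih _ _ _ _ _ _ _ hT₂ hX' hY'
      have hZ₁ : IsZero Z₁ := (Triangle.isZero₃_iff_isIso₁ _ hT₁).2 ‹_›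
      obtain ⟨e₃⟩ := cone_sum' hT₁ hT₂ hT (e ≪≫ L.symm) (e' ≪≫ R) (by
        rw [← hv]; simp [f])
      exact ⟨l, hl.iso (isoZeroBiprod hZ₁ ≪≫ e₃.symm)⟩

/-- The set of objects that are finite sums of shifts `E⟦k⟧` with `p k`. -/
def ssSet (p : ℤ → Prop) (E : C) : Set C := {X | ∃ n, SS p E n X}

lemma sumShifts_eq (E : C) : sumShifts E = ssSet (fun _ => True) E := by
  ext X
  constructor
  · rintro ⟨m, k, ⟨e⟩⟩
    exact ⟨m, (ss_of_biproduct k fun _ => trivial).iso e.symm⟩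
  · rintro ⟨m, h⟩
    obtain ⟨k, -, e⟩ := h.to_biproduct
    exact ⟨m, k, e⟩

lemma sumShiftsNonneg_eq (E : C) : sumShiftsNonneg E = ssSet (fun k => 0 ≤ k) E := by
  ext X
  constructor
  · rintro ⟨m, k, hk, ⟨e⟩⟩
    exact ⟨m, (ss_of_biproduct k hk).iso e.symm⟩
  · rintro ⟨m, h⟩
    obtain ⟨k, hk, e⟩ := h.to_biproduct
    exact ⟨m, k, hk, e⟩

lemma sumCopies_eq (E : C) : sumCopies E = ssSet (fun k => k = 0) E := by
  ext X
  constructor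
  · rintro ⟨m, ⟨e⟩⟩
    exact ⟨m, (ss_of_biproduct (p := fun k => k = 0) (fun _ => 0) fun _ => rfl).iso
      ((biproduct.mapIso fun _ => shiftZero ℤ E) ≪≫ e.symm)⟩
  · rintro ⟨m, h⟩
    obtain ⟨k, hk, ⟨e⟩⟩ := h.to_biproduct
    obtain rfl : k = fun _ => 0 := funext hk
    exact ⟨m, ⟨e ≪≫ biproduct.mapIso fun _ => shiftZero ℤ E⟩⟩

/-- Shifting back and forth. -/
noncomputable def shCancel (X : C) {a b : ℤ} (h : a + b = 0) : X⟦a⟧⟦b⟧ ≅ X :=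
  shAdd X h ≪≫ shiftZero ℤ X

lemma ssSet_iso {p : ℤ → Prop} {E X Y : C} (e : X ≅ Y) (h : X ∈ ssSet p E) : Y ∈ ssSet p E := by
  obtain ⟨n, h⟩ := h
  exact ⟨n, h.iso e⟩

lemma ssSet_zero {p : ℤ → Prop} {E X : C} (h : IsZero X) : X ∈ ssSet p E := ⟨0, .zero _ h⟩

lemma ssSet_single {p : ℤ → Prop} {E : C} {k : ℤ} (hk : p k) : E⟦k⟧ ∈ ssSet p E :=
  ⟨1, (SS.cons (.zero 0 (isZero_zero C)) hk).iso (isoBiprodZero (isZero_zero C)).symm⟩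

lemma ssSet_mono {p q : ℤ → Prop} {E X : C} (h : X ∈ ssSet p E) (hpq : ∀ k, p k → q k) :
    X ∈ ssSet q E := by
  obtain ⟨n, h⟩ := h
  exact ⟨n, h.mono hpq⟩

lemma ssSet_shift {p q : ℤ → Prop} {E X : C} (h : X ∈ ssSet p E) (m : ℤ)
    (hpq : ∀ k, p k → q (k + m)) : X⟦m⟧ ∈ ssSet q E := by
  obtain ⟨n, h⟩ := h
  exact ⟨n, h.shift m hpq⟩

lemma ssSet_unshift {p q : ℤ → Prop} {E X : C} (m : ℤ) (h : X⟦m⟧ ∈ ssSet p E)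
    (hpq : ∀ k, p k → q (k - m)) : X ∈ ssSet q E :=
  ssSet_iso (shCancel X (add_neg_cancel m))
    (ssSet_shift h (-m) fun k hk => by simpa [sub_eq_add_neg] using hpq k hk)

lemma shSet_ssSet (p : ℤ → Prop) (E : C) (m : ℤ) :
    shSet (ssSet p E) m = ssSet (fun k => p (k - m)) E := by
  ext X
  constructor
  · rintro ⟨Y, hY, ⟨e⟩⟩
    exact ssSet_iso e.symm (ssSet_shift hY m fun k hk => by simpa using hk)
  · intro h
    exact ⟨X⟦-m⟧, ssSet_shift h (-m) fun k hk => by simpa [sub_eq_add_neg] using hk,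
      ⟨(shCancel X (neg_add_cancel m)).symm⟩⟩

lemma ssSet_hom_zero {p q : ℤ → Prop} {E F X Y : C} (h : X ∈ ssSet p E)
    (h' : Y ∈ ssSet q F) (hpq : ∀ k l, p k → q l → ∀ f : E⟦k⟧ ⟶ F⟦l⟧, f = 0) (f : X ⟶ Y) :
    f = 0 := by
  obtain ⟨n, h⟩ := h
  obtain ⟨m, h'⟩ := h'
  exact h.hom_zero h' hpq f

lemma ssSet_restrict {p q : ℤ → Prop} {E X : C} (hE : ¬ IsZero E) (h : X ∈ ssSet p E)
    (hq : ∀ k, p k → ¬ q k → ∀ f : E⟦k⟧ ⟶ X, f = 0) : X ∈ ssSet q E := by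
  obtain ⟨n, h⟩ := h
  exact ⟨n, h.restrict hE hq⟩

lemma ssSet_split {p : ℤ → Prop} {E X : C} (h : X ∈ ssSet p E) (q : ℤ → Prop) :
    ∃ (A B : C), A ∈ ssSet (fun k => p k ∧ q k) E ∧ B ∈ ssSet (fun k => p k ∧ ¬ q k) E ∧
      Nonempty (X ≅ A ⊞ B) := by
  obtain ⟨n, h⟩ := h
  obtain ⟨A, B, a, b, hA, hB, e⟩ := h.split q
  exact ⟨A, B, ⟨a, hA⟩, ⟨b, hB⟩, e⟩

lemma ssSet_bounded {p : ℤ → Prop} {E X : C} (h : X ∈ ssSet p E) :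
    ∃ N : ℤ, X ∈ ssSet (fun k => -N ≤ k ∧ k ≤ N) E := by
  obtain ⟨n, h⟩ := h
  induction h with
  | zero X hX => exact ⟨0, ssSet_zero hX⟩
  | succ n k X Y hk hY e ih =>
    obtain ⟨N, m, hm⟩ := ih
    refine ⟨max N |k|, m + 1, .succ m k X Y ?_ (hm.mono ?_) e⟩
    · have := neg_abs_le k
      have := le_abs_self k
      constructor
      · have := le_max_right N |k|
        omega
      · have := le_max_right N |k|
        omega
    · intro l hl
      have := le_max_left N |k|
      omega

lemma shift_hom {E F : C} (k l : ℤ) (h : ∀ f : E ⟶ F⟦l - k⟧, f = 0) (f : E⟦k⟧ ⟶ F⟦l⟧) : f = 0 :=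
  hom_iso_zero (Iso.refl _) (shAdd F (sub_add_cancel l k)) (hom_shift_zero k h) f

section One

variable {E : C} (hz : ¬ IsZero E) (hne : ∀ k l : ℤ, k ≠ l → ∀ f : E⟦k⟧ ⟶ E⟦l⟧, f = 0)
  (hiso : ∀ (k l : ℤ) (f : E⟦k⟧ ⟶ E⟦l⟧), f ≠ 0 → IsIso f)

lemma ssSet_sub (hiso : ∀ (k l : ℤ) (f : E⟦k⟧ ⟶ E⟦l⟧), f ≠ 0 → IsIso f) :
    IsTriangulatedSub (ssSet (fun _ => True) E) where
  zero := fun X hX => ssSet_zero hX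
  isoClosed := ssSet_iso
  shift := fun n X hX => ssSet_shift hX n fun _ _ => trivial
  ext₂ := by
    rintro T hT hX hZ
    obtain ⟨n, hn⟩ : T.obj₁⟦(1 : ℤ)⟧ ∈ ssSet (fun _ => True) E :=
      ssSet_shift hX 1 fun _ _ => trivial
    obtain ⟨m, hm⟩ := hZ
    refine ssSet_unshift (p := fun _ => True) 1 (SS.cone hiso m n _ _ _ T.mor₃ _ _
      (rot_of_distTriang _ (rot_of_distTriang _ hT)) hm hn) (fun _ _ => trivial)

lemma rOrth_of_neg (hne : ∀ k l : ℤ, k ≠ l → ∀ f : E⟦k⟧ ⟶ E⟦l⟧, f = 0) {X : C}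
    (hX : X ∈ ssSet (fun k => k < 0) E) :
    X ∈ ssSet (fun _ => True) E ∩ rOrth (ssSet (fun k => 0 ≤ k) E) := by
  refine ⟨ssSet_mono hX fun _ _ => trivial, fun Y hY f => ?_⟩
  exact ssSet_hom_zero hY hX (fun k l hk hl => hne k l (by omega)) f

lemma neg_of_rOrth (hz : ¬ IsZero E) {X : C}
    (hX : X ∈ ssSet (fun _ => True) E ∩ rOrth (ssSet (fun k => 0 ≤ k) E)) :
    X ∈ ssSet (fun k => k < 0) E :=
  ssSet_restrict hz hX.1 fun k _ hk f => hX.2 _ (ssSet_single (not_lt.1 hk)) f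

lemma tri_biprod {X A B : C} (e : X ≅ A ⊞ B) : ∃ (f : A ⟶ X) (g : X ⟶ B) (h : B ⟶ A⟦(1 : ℤ)⟧),
    Triangle.mk f g h ∈ distTriang C := by
  refine ⟨biprod.inl ≫ e.inv, e.hom ≫ biprod.snd, 0,
    isomorphic_distinguished _ (binaryBiproductTriangle_distinguished A B) _ ?_⟩
  exact Triangle.isoMk _ _ (Iso.refl _) e (Iso.refl _)
    (by simp [Triangle.mk, binaryBiproductTriangle]) (by simp [Triangle.mk, binaryBiproductTriangle])
    (by simp [Triangle.mk, binaryBiproductTriangle])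

lemma tstr_one (hne : ∀ k l : ℤ, k ≠ l → ∀ f : E⟦k⟧ ⟶ E⟦l⟧, f = 0) :
    IsTStructureOn (ssSet (fun _ => True) E) (ssSet (fun k => 0 ≤ k) E) where
  subset := fun X hX => ssSet_mono hX fun _ _ => trivial
  isoClosed := ssSet_iso
  shift := fun X hX => ssSet_shift hX 1 fun k hk => by omega
  exists_triangle := by
    intro X hX
    obtain ⟨A, B, hA, hB, ⟨e⟩⟩ := ssSet_split hX (fun k => 0 ≤ k)
    obtain ⟨f, g, h, hT⟩ := tri_biprod e
    exact ⟨A, B, ssSet_mono hA fun k hk => hk.2,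
      rOrth_of_neg hne (ssSet_mono hB fun k hk => not_le.1 hk.2), f, g, h, hT⟩

lemma mem_geN {S le : Set C} {X : C} (j : ℤ) (h : X⟦j - 1⟧ ∈ S ∩ rOrth le) : X ∈ geN S le j :=
  ⟨_, h, ⟨(shCancel X (by omega)).symm⟩⟩

lemma mem_leN {le : Set C} {X : C} (i : ℤ) (h : X⟦i⟧ ∈ le) : X ∈ leN le i :=
  ⟨_, h, ⟨(shCancel X (by omega)).symm⟩⟩

lemma bdd_one (hne : ∀ k l : ℤ, k ≠ l → ∀ f : E⟦k⟧ ⟶ E⟦l⟧, f = 0) :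
    IsBoundedOn (ssSet (fun _ => True) E) (ssSet (fun k => 0 ≤ k) E) := by
  intro X hX
  obtain ⟨N, hN⟩ := ssSet_bounded hX
  refine ⟨N, -N, mem_leN _ (ssSet_shift hN N fun k hk => by omega), mem_geN _ ?_⟩
  exact rOrth_of_neg hne (ssSet_shift hN _ fun k hk => by omega)

lemma heart_one (hz : ¬ IsZero E) (hne : ∀ k l : ℤ, k ≠ l → ∀ f : E⟦k⟧ ⟶ E⟦l⟧, f = 0) :
    heartOn (ssSet (fun _ => True) E) (ssSet (fun k => 0 ≤ k) E) = ssSet (fun k => k = 0) E := by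
  ext X
  constructor
  · rintro ⟨h1, Y, hY, ⟨e⟩⟩
    rw [leN, shSet_ssSet] at h1
    have hX : X ∈ ssSet (fun k => k ≤ 0) E :=
      ssSet_iso e.symm (ssSet_shift (neg_of_rOrth hz hY) _ fun k hk => by omega)
    refine ssSet_restrict hz h1 fun k hk hk0 f => ?_
    exact ssSet_hom_zero (ssSet_single (p := fun l => 0 < l) (by omega)) hX
      (fun k l hk hl => hne k l (by omega)) f
  · intro hX
    refine ⟨?_, mem_geN _ (rOrth_of_neg hne (ssSet_shift hX _ fun k hk => by omega))⟩
    rw [leN, shSet_ssSet]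
    exact ssSet_mono hX fun k hk => by omega

end One

lemma star_shift {p q p' q' : ℤ → Prop} {E F X : C} (h : X ∈ star (ssSet p E) (ssSet q F)) (m : ℤ)
    (hp : ∀ k, p k → p' (k + m)) (hq : ∀ k, q k → q' (k + m)) :
    X⟦m⟧ ∈ star (ssSet p' E) (ssSet q' F) := by
  obtain ⟨A, hA, B, hB, f, g, k, hT⟩ := h
  obtain ⟨f', g', k', hT'⟩ := tri_shift hT m
  exact ⟨_, ssSet_shift hA m hp, _, ssSet_shift hB m hq, f', g', k', hT'⟩

lemma star_mono {p q p' q' : ℤ → Prop} {E F X : C} (h : X ∈ star (ssSet p E) (ssSet q F))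
    (hp : ∀ k, p k → p' k) (hq : ∀ k, q k → q' k) :
    X ∈ star (ssSet p' E) (ssSet q' F) := by
  obtain ⟨A, hA, B, hB, f, g, k, hT⟩ := h
  exact ⟨_, ssSet_mono hA hp, _, ssSet_mono hB hq, f, g, k, hT⟩

lemma exc_iso {K : Type*} [Field K] [Linear K C] {E : C} (hE : IsExceptional K E) :
    (¬ IsZero E) ∧ (∀ k l : ℤ, k ≠ l → ∀ f : E⟦k⟧ ⟶ E⟦l⟧, f = 0) ∧
    (∀ (k l : ℤ) (f : E⟦k⟧ ⟶ E⟦l⟧), f ≠ 0 → IsIso f) := by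
  obtain ⟨hz, hend, hn⟩ := hE
  have hne : ∀ k l : ℤ, k ≠ l → ∀ f : E⟦k⟧ ⟶ E⟦l⟧, f = 0 :=
    fun k l hkl => shift_hom k l (hn _ (by omega))
  refine ⟨hz, hne, fun k l f hf => ?_⟩
  by_cases hkl : k = l
  · subst hkl
    obtain ⟨a, ha⟩ := hend ((shiftFunctor C k).preimage f)
    have hfa : f = (shiftFunctor C k).map (a • 𝟙 E) := by rw [← ha, Functor.map_preimage]
    have ha0 : a ≠ 0 := by
      rintro rfl
      exact hf (by rw [hfa]; simp)
    have : IsIso (a • 𝟙 E) := ⟨a⁻¹ • 𝟙 E, by simp [smul_smul, ha0], by simp [smul_smul, ha0]⟩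
    rw [hfa]
    infer_instance
  · exact (hf (hne k l hkl f)).elim

section Two

variable {E₁ E₂ : C}

/-- Every object of `⟨T₁, T₂⟩` splits according to the glued t-structure. -/
lemma glued_split (hne₁₂ : ∀ k l : ℤ, k ≠ l → ∀ f : E₁⟦k⟧ ⟶ E₂⟦l⟧, f = 0)
    {X : C} (hX : X ∈ star (ssSet (fun _ => True) E₂) (ssSet (fun _ => True) E₁)) :
    ∃ A B : C, A ∈ star (ssSet (fun k => 0 ≤ k) E₂) (ssSet (fun k => 0 ≤ k - 1) E₁) ∧
      B ∈ star (ssSet (fun k => k < 0) E₂) (ssSet (fun k => k - 1 < 0) E₁) ∧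
      Nonempty (X ≅ A ⊞ B) := by
  obtain ⟨A, hA, B, hB, f, g, h, hT⟩ := hX
  obtain ⟨P, Q, hP, hQ, ⟨eA⟩⟩ := ssSet_split hA (fun k => 0 ≤ k)
  have hB' : B⟦(-1 : ℤ)⟧ ∈ ssSet (fun _ => True) E₁ := ssSet_shift hB _ fun _ _ => trivial
  obtain ⟨U, V, hU, hV, ⟨eB⟩⟩ := ssSet_split hB' (fun k => 0 ≤ k)
  have hT' := inv_rot_of_distTriang _ hT
  obtain ⟨w, g', h', hw⟩ : ∃ (w : B⟦(-1 : ℤ)⟧ ⟶ A) (g' : A ⟶ X) (h' : X ⟶ B⟦(-1 : ℤ)⟧⟦(1 : ℤ)⟧),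
    Triangle.mk w g' h' ∈ distTriang C := ⟨_, _, _, hT'⟩
  let w' := eB.inv ≫ w ≫ eA.hom
  obtain ⟨Z₁, g₁, h₁, hT₁⟩ := distinguished_cocone_triangle (biprod.inl ≫ w' ≫ biprod.fst)
  obtain ⟨Z₂, g₂, h₂, hT₂⟩ := distinguished_cocone_triangle (biprod.inr ≫ w' ≫ biprod.snd)
  have e1 : biprod.inl ≫ w' ≫ biprod.snd = 0 :=
    ssSet_hom_zero hU hQ (fun k l hk hl => hne₁₂ k l (by omega)) _
  have e2 : biprod.inr ≫ w' ≫ biprod.fst = 0 :=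
    ssSet_hom_zero hV hP (fun k l hk hl => hne₁₂ k l (by omega)) _
  have e3 : w' = biprod.map (biprod.inl ≫ w' ≫ biprod.fst) (biprod.inr ≫ w' ≫ biprod.snd) := by
    ext
    · simp
    · simpa using e1
    · simpa using e2
    · simp
  obtain ⟨e⟩ := cone_sum' hT₁ hT₂ hw eB eA (by rw [← e3]; simp [w'])
  refine ⟨Z₁, Z₂, ?_, ?_, ⟨e⟩⟩
  · exact ⟨P, ssSet_mono hP fun k hk => hk.2, U⟦(1 : ℤ)⟧, ssSet_shift hU 1 fun k hk => by omega,
      _, _, _, rot_of_distTriang _ hT₁⟩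
  · exact ⟨Q, ssSet_mono hQ fun k hk => by omega, V⟦(1 : ℤ)⟧,
      ssSet_shift hV 1 fun k hk => by omega, _, _, _, rot_of_distTriang _ hT₂⟩

end Two

end Helpers

/-- Example 2.13 and Corollary 2.14, first part: for a full strong
exceptional pair `⟨E₁, E₂⟩` in a `K`-linear triangulated category with
`dim_K Hom(E₁, E₂) < ∞`, the subcategories `T_i` generated by the `E_i` form a
semiorthogonal decomposition, each carries a bounded t-structure whose aisle consists of
sums of non-negative shifts of `E_i` and whose heart consists of the sums of copies of
`E_i`; these t-structures are compatible, and the glued subcategory `A₂ * (A₁[1])` is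
the heart of a bounded t-structure on `C` of homological dimension at most `1`. -/
theorem exceptional_pair_glued_heart {K : Type*} [Field K] [Linear K C]
    (E₁ E₂ : C)
    (hE₁ : IsExceptional K E₁) (hE₂ : IsExceptional K E₂)
    (hseq : ∀ n : ℤ, ∀ f : E₂ ⟶ E₁⟦n⟧, f = 0)
    (hstrong : ∀ n : ℤ, n ≠ 0 → ∀ f : E₁ ⟶ E₂⟦n⟧, f = 0)
    (hfull : ∀ S : Set C, IsTriangulatedSub S → E₁ ∈ S → E₂ ∈ S → ∀ X : C, X ∈ S)
    (hfin : FiniteDimensional K (E₁ ⟶ E₂)) :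
    IsSOD (sumShifts E₁) (sumShifts E₂) ∧
    IsTStructureOn (sumShifts E₁) (sumShiftsNonneg E₁) ∧
      IsBoundedOn (sumShifts E₁) (sumShiftsNonneg E₁) ∧
      heartOn (sumShifts E₁) (sumShiftsNonneg E₁) = sumCopies E₁ ∧
    IsTStructureOn (sumShifts E₂) (sumShiftsNonneg E₂) ∧
      IsBoundedOn (sumShifts E₂) (sumShiftsNonneg E₂) ∧
      heartOn (sumShifts E₂) (sumShiftsNonneg E₂) = sumCopies E₂ ∧
    Compatible (sumShifts E₂) (sumShiftsNonneg E₁) (sumShiftsNonneg E₂) ∧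
    IsTStructureOn Set.univ (glued (sumShiftsNonneg E₁) (sumShiftsNonneg E₂)) ∧
    IsBoundedOn Set.univ (glued (sumShiftsNonneg E₁) (sumShiftsNonneg E₂)) ∧
    heartOn Set.univ (glued (sumShiftsNonneg E₁) (sumShiftsNonneg E₂)) =
      star (sumCopies E₂) (shSet (sumCopies E₁) 1) ∧
    (∀ A ∈ star (sumCopies E₂) (shSet (sumCopies E₁) 1),
     ∀ B ∈ star (sumCopies E₂) (shSet (sumCopies E₁) 1),
     ∀ n : ℤ, 1 < n → ∀ f : A ⟶ B⟦n⟧, f = 0) := by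

  obtain ⟨hz₁, hne₁, hiso₁⟩ := exc_iso hE₁
  obtain ⟨hz₂, hne₂, hiso₂⟩ := exc_iso hE₂
  have h21 : ∀ k l : ℤ, ∀ f : E₂⟦k⟧ ⟶ E₁⟦l⟧, f = 0 := fun k l => shift_hom k l (hseq _)
  have h12 : ∀ k l : ℤ, k ≠ l → ∀ f : E₁⟦k⟧ ⟶ E₂⟦l⟧, f = 0 :=
    fun k l hkl => shift_hom k l (hstrong _ (by omega))
  have orth : ∀ {p q : ℤ → Prop}, ∀ X ∈ ssSet p E₂, ∀ Y ∈ ssSet q E₁, ∀ f : X ⟶ Y, f = 0 :=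
    fun X hX Y hY => ssSet_hom_zero hX hY fun k l _ _ => h21 k l
  have hs₁ := ssSet_sub hiso₁
  have hs₂ := ssSet_sub hiso₂
  have all : ∀ X : C, X ∈ star (ssSet (fun _ => True) E₂) (ssSet (fun _ => True) E₁) := by
    refine hfull _ (star_sub hs₁ hs₂ orth) ?_ ?_
    · exact right_mem_star (fun _ => ssSet_zero)
        (ssSet_iso (shiftZero ℤ E₁) (ssSet_single trivial))
    · exact left_mem_star (fun _ => ssSet_zero)
        (ssSet_iso (shiftZero ℤ E₂) (ssSet_single trivial))
  have coaisle : ∀ X : C, X ∈ star (ssSet (fun k => k < 0) E₂) (ssSet (fun k => k - 1 < 0) E₁) →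
      X ∈ Set.univ ∩
        rOrth (star (ssSet (fun k => 0 ≤ k) E₂) (ssSet (fun k => 0 ≤ k - 1) E₁)) := by
    refine fun X hX => ⟨trivial, fun Y hY f => hom_star_zero hY hX ?_ orth ?_ ?_ f⟩
    · exact fun A hA B hB => ssSet_hom_zero hA hB fun k l hk hl => hne₂ k l (by omega)
    · exact fun A hA B hB => ssSet_hom_zero hA hB fun k l hk hl => h12 k l (by omega)
    · exact fun A hA B hB => ssSet_hom_zero hA hB fun k l hk hl => hne₁ k l (by omega)
  simp only [glued, sumShifts_eq, sumShiftsNonneg_eq, sumCopies_eq, shSet_ssSet]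
  refine ⟨⟨hs₁, hs₂, orth, fun X => by obtain ⟨A, hA, B, hB, f, g, h, hT⟩ := all X; exact ⟨A, B, hA, hB, f, g, h, hT⟩⟩, tstr_one hne₁, bdd_one hne₁, heart_one hz₁ hne₁,
    tstr_one hne₂, bdd_one hne₂, heart_one hz₂ hne₂, ?_, ?_, ?_, ?_, ?_⟩
  · intro X hX Y hY
    exact ssSet_hom_zero hX (neg_of_rOrth hz₂ hY) fun k l hk hl => h12 k l (by omega)
  · refine ⟨fun _ _ => trivial, star_iso, fun X hX => ?_, fun X _ => ?_⟩
    · exact star_shift hX 1 (fun k hk => by omega) (fun k hk => by omega)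
    · obtain ⟨A, B, hA, hB, ⟨e⟩⟩ := glued_split h12 (all X)
      obtain ⟨f, g, h, hT⟩ := tri_biprod e
      exact ⟨A, B, hA, coaisle B hB, f, g, h, hT⟩
  · intro X _
    obtain ⟨A, hA, B, hB, f, g, h, hT⟩ := all X
    obtain ⟨N, hN⟩ := ssSet_bounded hA
    obtain ⟨M, hM⟩ := ssSet_bounded hB
    have hX : X ∈ star (ssSet (fun k => -N ≤ k ∧ k ≤ N) E₂) (ssSet (fun k => -M ≤ k ∧ k ≤ M) E₁) :=
      ⟨A, hN, B, hM, f, g, h, hT⟩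
    have := le_max_left N M
    have := le_max_right N M
    refine ⟨max N M + 1, - max N M, mem_leN _ ?_, mem_geN _ (coaisle _ ?_)⟩
    · exact star_shift hX _ (fun k hk => by omega) (fun k hk => by omega)
    · exact star_shift hX _ (fun k hk => by omega) (fun k hk => by omega)
  · ext X
    constructor
    · rintro ⟨⟨Y, hY, ⟨e⟩⟩, X', hX', ⟨e'⟩⟩
      have hX : X ∈ star (ssSet (fun k => 0 ≤ k) E₂) (ssSet (fun k => 0 ≤ k - 1) E₁) :=
        star_iso e.symm (star_shift hY _ (fun k hk => by omega) (fun k hk => by omega))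
      -- vanishing of maps from the shifted aisle
      have van : ∀ W ∈ star (ssSet (fun k => 1 ≤ k) E₂) (ssSet (fun k => 2 ≤ k) E₁),
          ∀ f : W ⟶ X, f = 0 := by
        intro W hW
        have hW' : W⟦(-1 : ℤ)⟧ ∈
            star (ssSet (fun k => 0 ≤ k) E₂) (ssSet (fun k => 0 ≤ k - 1) E₁) :=
          star_shift hW _ (fun k hk => by omega) (fun k hk => by omega)
        refine hom_iso_zero (shCancel W (by omega)) e'.symm
          (hom_shift_zero (1 - 0) (hX'.2 _ hW'))
      obtain ⟨P, hP, B, hB, f, g, h, hT⟩ := hX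
      have hP0 : P ∈ ssSet (fun k => k = 0) E₂ := by
        refine ssSet_restrict hz₂ hP fun k hk hk0 u => ?_
        have h1 : u ≫ f = 0 := van _ (left_mem_star (fun _ => ssSet_zero)
          (ssSet_single (by omega))) _
        have h2 : u⟦(1 : ℤ)⟧' = 0 := by
          obtain ⟨v, hv⟩ := ex1 hT (u⟦(1 : ℤ)⟧') (by rw [← Functor.map_comp, h1, Functor.map_zero])
          rw [hv, orth (p := fun _ => True) _ (ssSet_shift (ssSet_single (p := fun _ => True)
            trivial) 1 fun _ _ => trivial) _ hB v, zero_comp]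
        exact (Functor.map_eq_zero_iff _).1 h2
      refine ⟨P, hP0, B, ?_, f, g, h, hT⟩
      refine ssSet_restrict hz₁ hB fun k hk hk0 u => ?_
      obtain ⟨v, rfl⟩ := ex3 hT u (ssSet_hom_zero (ssSet_single (p := fun l => 2 ≤ l) (by omega))
        (ssSet_shift (q := fun l => l = 1) hP0 1 fun k hk => by omega)
        (fun k l hk hl => h12 k l (by omega)) _)
      rw [van _ (right_mem_star (fun _ => ssSet_zero) (ssSet_single (by omega))) v, zero_comp]
    · intro hX
      refine ⟨mem_leN _ ?_, mem_geN _ (coaisle _ ?_)⟩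
      · exact star_shift hX _ (fun k hk => by omega) (fun k hk => by omega)
      · exact star_shift hX _ (fun k hk => by omega) (fun k hk => by omega)
  · intro A hA B hB n hn
    have hBn : B⟦n⟧ ∈ star (ssSet (fun k => k = n) E₂) (ssSet (fun k => k = n + 1) E₁) :=
      star_shift hB n (fun k hk => by omega) (fun k hk => by omega)
    refine hom_star_zero hA hBn ?_ orth ?_ ?_
    · exact fun A hA B hB => ssSet_hom_zero hA hB fun k l hk hl => hne₂ k l (by omega)
    · exact fun A hA B hB => ssSet_hom_zero hA hB fun k l hk hl => h12 k l (by omega)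
    · exact fun A hA B hB => ssSet_hom_zero hA hB fun k l hk hl => hne₁ k l (by omega)

end Paper
end

section
/- Let K be a field, and consider the bounded derived category D^b(P¹_K) of coherent sheaves on the projective line over K. The full subcategory A := { objects isomorphic to O^{⊕a}[2] ⊕ O(1)^{⊕b} for some a, b ≥ 0 } is the heart of a bounded t-structure on D^b(P¹_K). -/
open CategoryTheory Category Limits Pretriangulated
namespace Paper
universe v u

variable {C : Type u} [Category.{v} C] [HasZeroObject C] [Preadditive C]
  [HasShift C ℤ] [∀ n : ℤ, (shiftFunctor C n).Additive] [Pretriangulated C]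

/-- Bridgeland's characterization of a heart of a bounded t-structure on `C`. -/
structure IsHeart [HasBinaryBiproducts C] (H : Set C) : Prop where
  isoClosed : ∀ {X Y : C}, (X ≅ Y) → X ∈ H → Y ∈ H
  zero : ∀ X : C, IsZero X → X ∈ H
  sums : ∀ {X Y : C}, X ∈ H → Y ∈ H → (X ⊞ Y) ∈ H
  neg_vanish : ∀ A ∈ H, ∀ B ∈ H, ∀ n : ℤ, n < 0 → ∀ f : A ⟶ B⟦n⟧, f = 0
  filtration : ∀ E : C, ∃ (m : ℕ) (obj : Fin (m+1) → C)
    (map : ∀ i : Fin m, obj i.castSucc ⟶ obj i.succ) (k : Fin m → ℤ),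
    IsZero (obj 0) ∧ obj (Fin.last m) = E ∧ (∀ i j : Fin m, i < j → k j < k i) ∧
    ∀ i : Fin m, ∃ (A : C) (_ : A ∈ H) (g : obj i.succ ⟶ A⟦k i⟧)
      (h : A⟦k i⟧ ⟶ (obj i.castSucc)⟦(1:ℤ)⟧),
      Triangle.mk (map i) g h ∈ distTriang C

/-- The glued subcategory `A = { O^{⊕a}[2] ⊕ O(1)^{⊕b} }` of the paper's Remark 5.4,
for an exceptional pair `(O, O1)`. -/
def tiltedSet [HasFiniteBiproducts C] (O O1 : C) : Set C :=
  {X | ∃ a b : ℕ,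
    Nonempty (X ≅ (⨁ (fun _ : Fin a => O⟦(2:ℤ)⟧)) ⊞ (⨁ (fun _ : Fin b => O1)))}

set_option linter.unusedSectionVars false
set_option linter.style.haveILetI false

/-! ### Generic vanishing lemmas -/

/-- All maps from `X` to `Y` vanish. -/
def HomZ (X Y : C) : Prop := ∀ f : X ⟶ Y, f = 0

lemma HomZ.of_iso {X Y Z : C} (h : HomZ X Z) (e : X ≅ Y) : HomZ Y Z := by
  intro f
  have := h (e.hom ≫ f)
  rw [← cancel_epi e.hom, this, comp_zero]

lemma homZ_shift_iff (X S : C) (a b c : ℤ) (h : a + b = c) :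
    HomZ (X⟦a⟧⟦b⟧) S ↔ HomZ (X⟦c⟧) S :=
  ⟨fun h' => h'.of_iso ((shiftFunctorAdd' C a b c h).app X).symm,
   fun h' => h'.of_iso ((shiftFunctorAdd' C a b c h).app X)⟩

lemma homZ_zero_iff (X S : C) : HomZ (X⟦(0:ℤ)⟧) S ↔ HomZ X S :=
  ⟨fun h' => h'.of_iso ((shiftFunctorZero C ℤ).app X),
   fun h' => h'.of_iso ((shiftFunctorZero C ℤ).app X).symm⟩

/-- Moving a shift from the target to the source. -/
lemma homZ_of_target (X S : C) (n : ℤ) (h : HomZ X (S⟦n⟧)) : HomZ (X⟦-n⟧) S := by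
  intro f
  have h1 := h ((shiftNegShift X n).inv ≫ f⟦n⟧')
  have h2 : f⟦n⟧' = 0 := by
    rw [← cancel_epi (shiftNegShift X n).inv, h1, comp_zero]
  exact (shiftFunctor C n).map_injective (by rw [h2, Functor.map_zero])

lemma homZ_to_target (X S : C) (n : ℤ) (h : HomZ (X⟦-n⟧) S) : HomZ X (S⟦n⟧) := by
  intro f
  have h1 := h (f⟦-n⟧' ≫ (shiftShiftNeg S n).hom)
  have h2 : f⟦-n⟧' = 0 := by
    rw [← cancel_mono (shiftShiftNeg S n).hom, h1, zero_comp]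
  exact (shiftFunctor C (-n)).map_injective (by rw [h2, Functor.map_zero])

lemma les_zero (T : Triangle C) (hT : T ∈ distTriang C) (S : C) (m : ℤ)
    (hz : ∀ f : T.obj₂⟦m⟧ ⟶ S, T.mor₁⟦m⟧' ≫ f = 0)
    (hi : ∀ w : T.obj₃⟦m-1⟧ ⟶ S, T.mor₂⟦m-1⟧' ≫ w = 0 → w = 0) :
    HomZ (T.obj₁⟦m⟧) S := by
  intro u
  let α := shiftFunctorAdd' C 1 (m-1) m (by omega)
  have hw : T.mor₃⟦m-1⟧' ≫ α.inv.app T.obj₁ ≫ u = 0 := by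
    apply hi
    rw [← assoc, ← Functor.map_comp, comp_distTriang_mor_zero₂₃ _ hT]
    simp
  have hT2 := Triangle.shift_distinguished _
    (rot_of_distTriang _ (rot_of_distTriang _ hT)) (m-1)
  obtain ⟨v, hv'⟩ : ∃ v : (T.obj₂⟦(1:ℤ)⟧)⟦m-1⟧ ⟶ S, α.inv.app T.obj₁ ≫ u =
      ((m-1).negOnePow • (-T.mor₁⟦(1:ℤ)⟧')⟦m-1⟧') ≫ v :=
    Triangle.yoneda_exact₂ _ hT2 (α.inv.app T.obj₁ ≫ u) (by
      change ((m-1).negOnePow • T.mor₃⟦m-1⟧') ≫ α.inv.app T.obj₁ ≫ u = 0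
      rw [Linear.units_smul_comp, hw, smul_zero])
  have h3 : (T.mor₁⟦(1:ℤ)⟧')⟦m-1⟧' ≫ v = 0 := by
    have hn : (T.mor₁⟦(1:ℤ)⟧')⟦m-1⟧' = α.inv.app _ ≫ T.mor₁⟦m⟧' ≫ α.hom.app _ := by
      have := α.hom.naturality T.mor₁
      rw [this]
      simp
    rw [hn]
    have := hz (α.hom.app _ ≫ v)
    simp only [assoc]
    rw [this, comp_zero]
  rw [Linear.units_smul_comp, Functor.map_neg, Preadditive.neg_comp, h3, neg_zero, smul_zero] at hv'
  rw [← cancel_epi (α.inv.app T.obj₁), hv', comp_zero]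

/-! ### Noetherian Hom modules -/

/-- precomposition -/
def preL {X Y : C} (φ : X ⟶ Y) (S : C) : (Y ⟶ S) →ₗ[End S] (X ⟶ S) where
  toFun f := φ ≫ f
  map_add' _ _ := Preadditive.comp_add _ _ _ _ _ _
  map_smul' r f := by
    change φ ≫ f ≫ r = (φ ≫ f) ≫ r
    rw [assoc]

/-- The Hom module is noetherian. -/
def HomN (X S : C) : Prop := IsNoetherian (End S) (X ⟶ S)

lemma HomN.of_iso {X Y S : C} (h : HomN X S) (e : X ≅ Y) : HomN Y S := by
  haveI : IsNoetherian (End S) (X ⟶ S) := h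
  refine isNoetherian_of_injective (preL e.hom S) ?_
  intro f g hfg
  exact (cancel_epi e.hom).1 hfg

lemma HomZ.homN {X S : C} (h : HomZ X S) : HomN X S := by
  haveI : Subsingleton (X ⟶ S) := ⟨fun a b => by rw [h a, h b]⟩
  unfold HomN
  infer_instance

lemma HomN.ext₂ (S : C) (T : Triangle C) (hT : T ∈ distTriang C) (h1 : HomN T.obj₁ S)
    (h3 : HomN T.obj₃ S) : HomN T.obj₂ S := by
  haveI : IsNoetherian (End S) (T.obj₁ ⟶ S) := h1
  haveI : IsNoetherian (End S) (T.obj₃ ⟶ S) := h3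
  refine isNoetherian_of_range_eq_ker (preL T.mor₂ S) (preL T.mor₁ S) ?_
  ext f
  constructor
  · rintro ⟨g, rfl⟩
    change T.mor₁ ≫ T.mor₂ ≫ g = 0
    rw [← assoc, comp_distTriang_mor_zero₁₂ _ hT, zero_comp]
  · intro hf
    obtain ⟨g, hg⟩ := Triangle.yoneda_exact₂ _ hT f hf
    exact ⟨g, hg.symm⟩

lemma HomZ.ext₂ (S : C) (T : Triangle C) (hT : T ∈ distTriang C) (h1 : HomZ T.obj₁ S)
    (h3 : HomZ T.obj₃ S) : HomZ T.obj₂ S := by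
  intro f
  obtain ⟨g, rfl⟩ := Triangle.yoneda_exact₂ _ hT f (h1 _)
  rw [h3 g, comp_zero]

/-- noetherian and bounded Homs -/
def Good (S : C) : Set C :=
  {E | (∀ m : ℤ, HomN (E⟦m⟧) S) ∧ ∃ N : ℤ, ∀ m : ℤ, (N < m ∨ m < -N) → HomZ (E⟦m⟧) S}

lemma good_triang (S : C) : IsTriangulatedSub (Good S) where
  zero X hX := by
    have h : ∀ m : ℤ, HomZ (X⟦m⟧) S := fun m f =>
      ((shiftFunctor C m).map_isZero hX).eq_of_src _ _
    exact ⟨fun m => (h m).homN, 0, fun m _ => h m⟩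
  isoClosed e h := ⟨fun m => (h.1 m).of_iso ((shiftFunctor C m).mapIso e), by
    obtain ⟨N, hN⟩ := h.2
    exact ⟨N, fun m hm => (hN m hm).of_iso ((shiftFunctor C m).mapIso e)⟩⟩
  shift n X h := by
    refine ⟨fun m => (h.1 (n+m)).of_iso ((shiftFunctorAdd' C n m _ rfl).app X), ?_⟩
    obtain ⟨N, hN⟩ := h.2
    refine ⟨N + |n|, fun m hm => (homZ_shift_iff X S n m _ rfl).2 (hN _ ?_)⟩
    have := neg_abs_le n
    have := le_abs_self n
    omega
  ext₂ T hT h1 h3 := by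
    refine ⟨fun m => HomN.ext₂ S _ (Triangle.shift_distinguished _ hT m) (h1.1 m) (h3.1 m), ?_⟩
    obtain ⟨N, hN⟩ := h1.2
    obtain ⟨N', hN'⟩ := h3.2
    refine ⟨max N N', fun m hm => HomZ.ext₂ S _ (Triangle.shift_distinguished _ hT m)
      (hN m ?_) (hN' m ?_)⟩ <;> omega

lemma good_of (S E : C) (n : ℤ) (h : HomN (E⟦n⟧) S) (hz : ∀ m, m ≠ n → HomZ (E⟦m⟧) S) :
    E ∈ Good S := by
  refine ⟨fun m => ?_, |n|, fun m hm => hz m ?_⟩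
  · by_cases hm : m = n
    · subst hm; exact h
    · exact (hz m hm).homN
  · have := neg_abs_le n
    have := le_abs_self n
    omega

/-! ### Coevaluation -/

lemma coev [HasFiniteBiproducts C] (X S : C) (hS : ∀ f : End S, IsUnit f ∨ f = 0)
    (hne : ¬ IsZero S) (hN : HomN X S) :
    ∃ (a : ℕ) (g : X ⟶ ⨁ (fun _ : Fin a => S)), (∀ f : X ⟶ S, ∃ h, g ≫ h = f) ∧
      (∀ h : (⨁ (fun _ : Fin a => S)) ⟶ S, g ≫ h = 0 → h = 0) ∧ (HomZ X S → a = 0) := by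
  haveI : Nontrivial (End S) := ⟨⟨1, 0, fun h => hne ((IsZero.iff_id_eq_zero S).2 h)⟩⟩
  letI : DivisionRing (End S) := DivisionRing.ofIsUnitOrEqZero hS
  haveI : IsNoetherian (End S) (X ⟶ S) := hN
  let b := Module.finBasis (End S) (X ⟶ S)
  have key : ∀ h : (⨁ (fun _ : Fin (Module.finrank (End S) (X ⟶ S)) => S)) ⟶ S,
      biproduct.lift (fun i => b i) ≫ h = ∑ i, (End.of (biproduct.ι (fun _ => S) i ≫ h)) • b i := by
    intro h
    have : h = biproduct.desc (fun i => biproduct.ι (fun _ => S) i ≫ h) := by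
      ext; simp
    conv_lhs => rw [this]
    rw [biproduct.lift_desc]
    rfl
  refine ⟨_, biproduct.lift (fun i => b i), ?_, ?_, ?_⟩
  · intro f
    refine ⟨biproduct.desc (fun i => (b.repr f i : End S)), ?_⟩
    rw [key]
    simp only [biproduct.ι_desc]
    exact b.sum_repr f
  · intro h hh
    rw [key] at hh
    have := Fintype.linearIndependent_iff.1 b.linearIndependent _ hh
    ext i
    rw [comp_zero]
    exact this i
  · intro hz
    haveI : Subsingleton (X ⟶ S) := ⟨fun a b => by rw [hz a, hz b]⟩
    exact Module.finrank_zero_of_subsingleton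

/-! ### The glued subcategory -/

section Glue

variable [HasFiniteBiproducts C]

/-- `S₁^a ⊞ S₂^b` -/
noncomputable abbrev glueObj [HasBinaryBiproducts C] (S₁ S₂ : C) (a b : ℕ) : C :=
  (⨁ (fun _ : Fin a => S₁)) ⊞ (⨁ (fun _ : Fin b => S₂))

/-- powers add -/
noncomputable def powAdd [HasBinaryBiproducts C] (S : C) (a b : ℕ) :
    (⨁ (fun _ : Fin a => S)) ⊞ (⨁ (fun _ : Fin b => S)) ≅ ⨁ (fun _ : Fin (a + b) => S) where
  hom := biprod.desc (biproduct.desc fun i => biproduct.ι (fun _ : Fin (a+b) => S) (Fin.castAdd b i))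
    (biproduct.desc fun j => biproduct.ι (fun _ : Fin (a+b) => S) (Fin.natAdd a j))
  inv := biproduct.desc (fun k : Fin (a+b) => Fin.addCases
    (motive := fun _ => S ⟶ (⨁ (fun _ : Fin a => S)) ⊞ (⨁ (fun _ : Fin b => S)))
    (fun i => biproduct.ι (fun _ : Fin a => S) i ≫ biprod.inl)
    (fun j => biproduct.ι (fun _ : Fin b => S) j ≫ biprod.inr) k)
  hom_inv_id := by
    apply biprod.hom_ext'
    · apply biproduct.hom_ext'; intro i; simp
    · apply biproduct.hom_ext'; intro i; simp
  inv_hom_id := by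
    apply biproduct.hom_ext'
    intro k
    refine Fin.addCases (fun i => ?_) (fun i => ?_) k <;> simp

/-- middle four interchange -/
noncomputable def midFour [HasBinaryBiproducts C] (A B D E : C) :
    (A ⊞ B) ⊞ (D ⊞ E) ≅ (A ⊞ D) ⊞ (B ⊞ E) where
  hom := biprod.desc (biprod.map biprod.inl biprod.inl) (biprod.map biprod.inr biprod.inr)
  inv := biprod.desc (biprod.map biprod.inl biprod.inl) (biprod.map biprod.inr biprod.inr)
  hom_inv_id := by
    apply biprod.hom_ext' <;> apply biprod.hom_ext' <;> simp
  inv_hom_id := by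
    apply biprod.hom_ext' <;> apply biprod.hom_ext' <;> simp

lemma homZ_pow (S S' : C) (a : ℕ) (j : ℤ) (h : HomZ (S⟦j⟧) S') :
    HomZ ((⨁ (fun _ : Fin a => S))⟦j⟧) S' := by
  intro f
  have : (𝟙 (⨁ (fun _ : Fin a => S)))⟦j⟧' = ∑ i,
      (biproduct.π (fun _ : Fin a => S) i)⟦j⟧' ≫ (biproduct.ι (fun _ : Fin a => S) i)⟦j⟧' := by
    rw [← biproduct.total, Functor.map_sum]
    simp
  rw [← id_comp f, ← CategoryTheory.Functor.map_id, this, Preadditive.sum_comp]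
  refine Finset.sum_eq_zero fun i _ => ?_
  rw [assoc, h ((biproduct.ι (fun _ : Fin a => S) i)⟦j⟧' ≫ f), comp_zero]

lemma homZ_biprod [HasBinaryBiproducts C] (X Y S' : C) (j : ℤ) (h : HomZ (X⟦j⟧) S')
    (h' : HomZ (Y⟦j⟧) S') : HomZ ((X ⊞ Y)⟦j⟧) S' := by
  intro f
  have : (𝟙 (X ⊞ Y))⟦j⟧' = (biprod.fst : X ⊞ Y ⟶ X)⟦j⟧' ≫ (biprod.inl : X ⟶ X ⊞ Y)⟦j⟧' +
      (biprod.snd : X ⊞ Y ⟶ Y)⟦j⟧' ≫ (biprod.inr : Y ⟶ X ⊞ Y)⟦j⟧' := by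
    rw [← biprod.total, Functor.map_add]
    simp
  rw [← id_comp f, ← CategoryTheory.Functor.map_id, this, Preadditive.add_comp, assoc, assoc,
    h ((biprod.inl : X ⟶ X ⊞ Y)⟦j⟧' ≫ f), h' ((biprod.inr : Y ⟶ X ⊞ Y)⟦j⟧' ≫ f),
    comp_zero, comp_zero, add_zero]

/-- The hypotheses on the two simple objects. -/
structure Simples (S₁ S₂ : C) : Prop where
  unit₁ : ∀ f : End S₁, IsUnit f ∨ f = 0
  unit₂ : ∀ f : End S₂, IsUnit f ∨ f = 0
  ne₁ : ¬ IsZero S₁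
  ne₂ : ¬ IsZero S₂
  z₁₁ : ∀ j : ℤ, j ≠ 0 → HomZ (S₁⟦j⟧) S₁
  z₂₂ : ∀ j : ℤ, j ≠ 0 → HomZ (S₂⟦j⟧) S₂
  z₂₁ : ∀ j : ℤ, HomZ (S₂⟦j⟧) S₁
  z₁₂ : ∀ j : ℤ, j ≠ -2 → HomZ (S₁⟦j⟧) S₂
  good₁ : ∀ E : C, E ∈ Good S₁
  good₂ : ∀ E : C, E ∈ Good S₂
  sep : ∀ E : C, (∀ m : ℤ, HomZ (E⟦m⟧) S₁ ∧ HomZ (E⟦m⟧) S₂) → IsZero E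

/-- The glued set for general `S₁`, `S₂`. -/
def glueSet [HasBinaryBiproducts C] (S₁ S₂ : C) : Set C :=
  {X | ∃ a b : ℕ, Nonempty (X ≅ glueObj S₁ S₂ a b)}

variable [HasBinaryBiproducts C] {S₁ S₂ : C}

lemma Simples.glue₁ (hS : Simples S₁ S₂) (a b : ℕ) (j : ℤ) (hj : j ≠ 0) :
    HomZ ((glueObj S₁ S₂ a b)⟦j⟧) S₁ :=
  homZ_biprod _ _ _ _ (homZ_pow _ _ _ _ (hS.z₁₁ j hj)) (homZ_pow _ _ _ _ (hS.z₂₁ j))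

lemma Simples.glue₂ (hS : Simples S₁ S₂) (a b : ℕ) (j : ℤ) (hj : j ≠ 0) (hj' : j ≠ -2 ∨ a = 0) :
    HomZ ((glueObj S₁ S₂ a b)⟦j⟧) S₂ := by
  refine homZ_biprod _ _ _ _ ?_ (homZ_pow _ _ _ _ (hS.z₂₂ j hj))
  rcases hj' with h | rfl
  · exact homZ_pow _ _ _ _ (hS.z₁₂ j h)
  · intro f
    refine ((shiftFunctor C j).map_isZero ?_).eq_of_src _ _
    rw [IsZero.iff_id_eq_zero]
    ext i
    exact i.elim0

/-- One step of a filtration. -/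
def Step (H : Set C) (X Y : C) (k : ℤ) : Prop :=
  ∃ (f : X ⟶ Y) (A : C) (_ : A ∈ H) (g : Y ⟶ A⟦k⟧) (h : A⟦k⟧ ⟶ X⟦(1:ℤ)⟧),
    Triangle.mk f g h ∈ distTriang C

/-- Filtration of `E` with all degrees at least `l`. -/
def Filt (H : Set C) (E : C) (l : ℤ) : Prop :=
  ∃ (m : ℕ) (obj : ℕ → C) (k : ℕ → ℤ), IsZero (obj 0) ∧ obj m = E ∧
    (∀ i j : ℕ, i < j → j < m → k j < k i) ∧ (∀ i < m, l ≤ k i) ∧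
    ∀ i < m, Step H (obj i) (obj (i+1)) (k i)

lemma Filt.append {H : Set C} {X Y : C} {l : ℤ} (h : Filt H X (l+1)) (hs : Step H X Y l) :
    Filt H Y l := by
  obtain ⟨m, obj, k, h0, hm, hk, hl, hst⟩ := h
  refine ⟨m+1, fun i => if i ≤ m then obj i else Y, fun i => if i < m then k i else l,
    by simpa using h0, by simp, ?_, ?_, ?_⟩
  · intro i j hij hj
    have hi : i < m := by omega
    by_cases hjm : j < m
    · simpa [hi, hjm] using hk i j hij hjm
    · have := hl i hi
      simp only [hi, hjm, if_true, if_false]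
      omega
  · intro i _
    by_cases him : i < m
    · have := hl i him
      simp only [him, if_true]
      omega
    · simp [him]
  · intro i hi
    by_cases him : i < m
    · have h1 : i ≤ m := by omega
      have h2 : i + 1 ≤ m := by omega
      simpa only [him, h1, h2, if_true] using hst i him
    · obtain rfl : i = m := by omega
      simpa [hm] using hs

lemma step_exists (hS : Simples S₁ S₂) (E : C) (M : ℤ) :
    ∃ (a b : ℕ) (g : E ⟶ (glueObj S₁ S₂ a b)⟦-M⟧),
      (∀ S, S = S₁ ∨ S = S₂ → (∀ f : E⟦M⟧ ⟶ S, ∃ h, g⟦M⟧' ≫ h = f) ∧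
        (∀ h : (glueObj S₁ S₂ a b)⟦-M⟧⟦M⟧ ⟶ S, g⟦M⟧' ≫ h = 0 → h = 0)) ∧
      (HomZ (E⟦M⟧) S₁ → a = 0) := by
  obtain ⟨a, g₁, hs₁, hi₁, ha⟩ := coev (E⟦M⟧) S₁ hS.unit₁ hS.ne₁ ((hS.good₁ E).1 M)
  obtain ⟨b, g₂, hs₂, hi₂, -⟩ := coev (E⟦M⟧) S₂ hS.unit₂ hS.ne₂ ((hS.good₂ E).1 M)
  let G : E⟦M⟧ ⟶ glueObj S₁ S₂ a b := biprod.lift g₁ g₂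
  have hz21 : HomZ (⨁ (fun _ : Fin b => S₂)) S₁ :=
    (homZ_zero_iff _ _).1 (homZ_pow _ _ _ _ (hS.z₂₁ 0))
  have hz12 : HomZ (⨁ (fun _ : Fin a => S₁)) S₂ :=
    (homZ_zero_iff _ _).1 (homZ_pow _ _ _ _ (hS.z₁₂ 0 (by omega)))
  have hG : ∀ S, S = S₁ ∨ S = S₂ → (∀ f : E⟦M⟧ ⟶ S, ∃ h, G ≫ h = f) ∧
        (∀ h : glueObj S₁ S₂ a b ⟶ S, G ≫ h = 0 → h = 0) := by
    rintro S (rfl | rfl)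
    · refine ⟨fun f => ?_, fun h hh => ?_⟩
      · obtain ⟨h, rfl⟩ := hs₁ f
        exact ⟨biprod.fst ≫ h, by simp [G]⟩
      · have h2 : biprod.inr ≫ h = 0 := hz21 _
        have h3 : h = biprod.fst ≫ biprod.inl ≫ h := by
          apply biprod.hom_ext' <;> simp [h2]
        rw [h3] at hh
        have := hi₁ (biprod.inl ≫ h) (by simpa [G] using hh)
        rw [h3, this, comp_zero]
    · refine ⟨fun f => ?_, fun h hh => ?_⟩
      · obtain ⟨h, rfl⟩ := hs₂ f
        exact ⟨biprod.snd ≫ h, by simp [G]⟩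
      · have h2 : biprod.inl ≫ h = 0 := hz12 _
        have h3 : h = biprod.snd ≫ biprod.inr ≫ h := by
          apply biprod.hom_ext' <;> simp [h2]
        rw [h3] at hh
        have := hi₂ (biprod.inr ≫ h) (by simpa [G] using hh)
        rw [h3, this, comp_zero]
  let g : E ⟶ (glueObj S₁ S₂ a b)⟦-M⟧ := (shiftShiftNeg E M).inv ≫ G⟦-M⟧'
  let e := shiftNegShift (glueObj S₁ S₂ a b) M
  have hg : g⟦M⟧' ≫ e.hom = G := by
    have h1 : (G⟦-M⟧')⟦M⟧' ≫ e.hom = (shiftNegShift (E⟦M⟧) M).hom ≫ G :=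
      (shiftEquiv C M).counitIso.hom.naturality G
    have h2 := shift_equiv_triangle M E
    simp only [g, Functor.map_comp, assoc]
    rw [h1, ← assoc, h2, id_comp]
  refine ⟨a, b, g, fun S hSS => ⟨fun f => ?_, fun h hh => ?_⟩, ha⟩
  · obtain ⟨h, rfl⟩ := (hG S hSS).1 f
    exact ⟨e.hom ≫ h, by rw [← assoc, hg]⟩
  · have := (hG S hSS).2 (e.inv ≫ h) (by rw [← hg]; simpa using hh)
    rw [← cancel_epi e.inv, this, comp_zero]

lemma filt_exists (hS : Simples S₁ S₂) (L : ℤ) (d : ℕ) : ∀ (E : C) (M : ℤ),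
    (M < L - 2 + d) → (∀ m, M < m → HomZ (E⟦m⟧) S₁ ∧ HomZ (E⟦m⟧) S₂) →
    (∀ m, m < L → HomZ (E⟦m⟧) S₁) → (∀ m, m < L - 2 → HomZ (E⟦m⟧) S₂) →
    Filt (glueSet S₁ S₂) E (-M) := by
  induction d with
  | zero =>
    intro E M hM h1 h2 h3
    have hE : IsZero E := hS.sep E fun m => by
      by_cases hm : M < m
      · exact h1 m hm
      · exact ⟨h2 m (by push_cast at hM; omega), h3 m (by push_cast at hM; omega)⟩
    exact ⟨0, fun _ => E, fun _ => 0, hE, rfl, by simp, by simp, by simp⟩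
  | succ d ih =>
    intro E M hM h1 h2 h3
    obtain ⟨a, b, g, hg, ha⟩ := step_exists hS E M
    obtain ⟨E', f, h, hT⟩ := distinguished_cocone_triangle₁ g
    have hB1 : ∀ m, m - 1 ≠ M → HomZ ((glueObj S₁ S₂ a b)⟦-M⟧⟦m-1⟧) S₁ := fun m hm =>
      (homZ_shift_iff _ _ _ _ _ rfl).2 (hS.glue₁ a b _ (by omega))
    have hB2 : ∀ m, m - 1 ≠ M → (m - 1 ≠ M - 2 ∨ a = 0) →
        HomZ ((glueObj S₁ S₂ a b)⟦-M⟧⟦m-1⟧) S₂ := fun m hm hm' =>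
      (homZ_shift_iff _ _ _ _ _ rfl).2 (hS.glue₂ a b _ (by omega) (by omega))
    -- vanishing in degrees at least `M`
    have hhi : ∀ m, M - 1 < m → ∀ S, S = S₁ ∨ S = S₂ → HomZ (E'⟦m⟧) S := by
      intro m hm S hSS
      refine les_zero _ hT S m ?_ ?_
      · intro u
        change f⟦m⟧' ≫ u = 0
        by_cases hmM : m = M
        · subst hmM
          obtain ⟨v, rfl⟩ := (hg S hSS).1 u
          have h0 : f ≫ g = 0 := comp_distTriang_mor_zero₁₂ _ hT
          rw [← assoc, ← Functor.map_comp, h0, Functor.map_zero, zero_comp]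
        · have : HomZ (E⟦m⟧) S := by
            rcases hSS with rfl | rfl
            · exact (h1 m (by omega)).1
            · exact (h1 m (by omega)).2
          rw [this u, comp_zero]
      · by_cases hmM : m - 1 = M
        · rw [hmM]
          exact (hg S hSS).2
        · intro w _
          rcases hSS with rfl | rfl
          · exact hB1 m hmM w
          · exact hB2 m hmM (by omega) w
    have hF : Filt (glueSet S₁ S₂) E' (-(M-1)) := by
      refine ih E' (M-1) (by push_cast at hM; omega)
        (fun m hm => ⟨hhi m hm _ (Or.inl rfl), hhi m hm _ (Or.inr rfl)⟩) ?_ ?_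
      · intro m hm
        by_cases hmM : M - 1 < m
        · exact hhi m hmM _ (Or.inl rfl)
        · refine les_zero _ hT S₁ m (fun u => ?_) (fun w _ => hB1 m (by omega) w)
          have : u = 0 := h2 m hm u
          rw [this, comp_zero]
      · intro m hm
        by_cases hmM : M - 1 < m
        · exact hhi m hmM _ (Or.inr rfl)
        · refine les_zero _ hT S₂ m (fun u => ?_) (fun w _ => hB2 m (by omega) ?_ w)
          · have : u = 0 := h3 m hm u
            rw [this, comp_zero]
          · by_cases hML : M < L
            · exact Or.inr (ha (h2 M hML))
            · left; omega
    have e : -(M-1) = -M + 1 := by ring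
    rw [e] at hF
    exact hF.append ⟨f, _, ⟨a, b, ⟨Iso.refl _⟩⟩, g, h, hT⟩

theorem heart_of_simples (hS : Simples S₁ S₂) : IsHeart (glueSet S₁ S₂) where
  isoClosed := by
    rintro X Y e ⟨a, b, ⟨e'⟩⟩
    exact ⟨a, b, ⟨e.symm ≪≫ e'⟩⟩
  zero X hX := by
    refine ⟨0, 0, ⟨hX.iso ?_⟩⟩
    rw [IsZero.iff_id_eq_zero]
    apply biprod.hom_ext' <;> apply biproduct.hom_ext' <;> exact fun i => i.elim0
  sums := by
    rintro X Y ⟨a, b, ⟨e⟩⟩ ⟨a', b', ⟨e'⟩⟩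
    exact ⟨a + a', b + b', ⟨biprod.mapIso e e' ≪≫ midFour _ _ _ _ ≪≫
      biprod.mapIso (powAdd _ _ _) (powAdd _ _ _)⟩⟩
  neg_vanish := by
    rintro A ⟨a, b, ⟨e⟩⟩ B ⟨a', b', ⟨e'⟩⟩ n hn
    refine homZ_to_target A B n ?_
    have h1 : HomZ (A⟦-n⟧) S₁ :=
      (hS.glue₁ a b (-n) (by omega)).of_iso ((shiftFunctor C (-n)).mapIso e.symm)
    have h2 : HomZ (A⟦-n⟧) S₂ :=
      (hS.glue₂ a b (-n) (by omega) (by omega)).of_iso ((shiftFunctor C (-n)).mapIso e.symm)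
    intro f
    rw [← cancel_mono e'.hom, zero_comp]
    apply biprod.hom_ext <;> apply biproduct.hom_ext <;> intro i
    · rw [h1 (((f ≫ e'.hom) ≫ biprod.fst) ≫ biproduct.π _ i), zero_comp, zero_comp]
    · rw [h2 (((f ≫ e'.hom) ≫ biprod.snd) ≫ biproduct.π _ i), zero_comp, zero_comp]
  filtration E := by
    obtain ⟨N₁, hN₁⟩ := (hS.good₁ E).2
    obtain ⟨N₂, hN₂⟩ := (hS.good₂ E).2
    let N := max (max N₁ N₂) 0
    have hF := filt_exists hS (-N) (2 * N + 3).toNat E N (by omega)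
      (fun m hm => ⟨hN₁ m (by omega), hN₂ m (by omega)⟩)
      (fun m hm => hN₁ m (by omega)) (fun m hm => hN₂ m (by omega))
    obtain ⟨m, obj, k, h0, hm, hk, -, hst⟩ := hF
    choose f A hA g h hT using hst
    refine ⟨m, fun i => obj i.val, fun i => f i.val i.isLt, fun i => k i.val, h0, hm,
      fun i j hij => hk _ _ hij j.isLt, fun i => ⟨A i.val i.isLt, hA _ _, g _ _, h _ _, hT _ _⟩⟩

end Glue

/-! ### The exceptional pair -/

lemma homN_self (S : C) (hS : ∀ f : End S, IsUnit f ∨ f = 0) (hne : ¬ IsZero S) : HomN S S := by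
  haveI : Nontrivial (End S) := ⟨⟨1, 0, fun h => hne ((IsZero.iff_id_eq_zero S).2 h)⟩⟩
  letI : DivisionRing (End S) := DivisionRing.ofIsUnitOrEqZero hS
  have h : IsNoetherian (End S) (End S) := inferInstance
  exact h

lemma exc_iso_or {K : Type*} [Field K] [Linear K C] {O : C} (hO : IsExceptional K O)
    (f : O ⟶ O) : IsIso f ∨ f = 0 := by
  obtain ⟨a, rfl⟩ := hO.2.1 f
  by_cases ha : a = 0
  · right; rw [ha, zero_smul]
  · left
    refine ⟨a⁻¹ • 𝟙 O, ?_, ?_⟩ <;> simp [smul_smul, ha]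

lemma sep_triang (E : C) : IsTriangulatedSub {X : C | ∀ n : ℤ, HomZ (E⟦n⟧) X} where
  zero X hX := fun n f => hX.eq_of_tgt _ _
  isoClosed {X Y} e h := fun n f => by
    rw [← cancel_mono e.inv, zero_comp]
    exact h n _
  shift k X h := fun n => homZ_to_target _ _ _ ((homZ_shift_iff _ _ _ _ _ rfl).2 (h _))
  ext₂ T hT h1 h3 := fun n f => by
    obtain ⟨g, rfl⟩ := Triangle.coyoneda_exact₂ _ hT f (h3 n _)
    rw [h1 n g, zero_comp]

lemma simples_of_pair {K : Type*} [Field K] [Linear K C]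
    (O O1 : C)
    (hO : IsExceptional K O) (hO1 : IsExceptional K O1)
    (hseq : ∀ n : ℤ, ∀ f : O1 ⟶ O⟦n⟧, f = 0)
    (hstrong : ∀ n : ℤ, n ≠ 0 → ∀ f : O ⟶ O1⟦n⟧, f = 0)
    (hfull : ∀ S : Set C, IsTriangulatedSub S → O ∈ S → O1 ∈ S → ∀ X : C, X ∈ S)
    (hdim : Module.finrank K (O ⟶ O1) = 2) :
    Simples (O⟦(2:ℤ)⟧) O1 := by
  have tgt : ∀ (X Y : C) (j : ℤ), HomZ X (Y⟦-j⟧) → HomZ (X⟦j⟧) Y := fun X Y j h => by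
    have := homZ_of_target X Y (-j) h
    rwa [neg_neg] at this
  have u2 : ∀ f : End O1, IsUnit f ∨ f = 0 := fun f => by
    rw [isUnit_iff_isIso]
    exact exc_iso_or hO1 f
  have u1 : ∀ f : End (O⟦(2:ℤ)⟧), IsUnit f ∨ f = 0 := fun f => by
    rw [isUnit_iff_isIso]
    obtain ⟨p, hp⟩ := (shiftFunctor C (2:ℤ)).map_surjective f
    rcases exc_iso_or hO p with h | h
    · left
      rw [← hp]
      infer_instance
    · right
      rw [← hp, h]
      exact Functor.map_zero _ _ _
  have n1 : ¬ IsZero (O⟦(2:ℤ)⟧) := fun h => hO.1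
    (((shiftFunctor C (-2:ℤ)).map_isZero h).of_iso (shiftShiftNeg O (2:ℤ)).symm)
  have o1 : ∀ m : ℤ, m ≠ 2 → HomZ (O⟦m⟧) (O⟦(2:ℤ)⟧) := fun m hm =>
    homZ_to_target _ _ _ ((homZ_shift_iff _ _ _ _ _ rfl).2
      (tgt O O _ (hO.2.2 _ (by omega))))
  have z21 : ∀ j : ℤ, HomZ (O1⟦j⟧) (O⟦(2:ℤ)⟧) := fun j =>
    homZ_to_target _ _ _ ((homZ_shift_iff _ _ _ _ _ rfl).2 (tgt O1 O _ (hseq _)))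
  have z22 : ∀ j : ℤ, j ≠ 0 → HomZ (O1⟦j⟧) O1 := fun j hj => tgt _ _ _ (hO1.2.2 _ (by omega))
  have o2 : ∀ j : ℤ, j ≠ 0 → HomZ (O⟦j⟧) O1 := fun j hj => tgt _ _ _ (hstrong _ (by omega))
  have hN : HomN O O1 := by
    haveI : Module.Finite K (O ⟶ O1) := Module.finite_of_finrank_pos (by omega)
    haveI : IsScalarTower K (End O1) (O ⟶ O1) := ⟨fun a r f => by
      change f ≫ (a • (show O1 ⟶ O1 from r)) = a • (f ≫ r)
      exact Linear.comp_smul _ _ _ _ _ _⟩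
    exact isNoetherian_of_tower K inferInstance
  refine ⟨u1, u2, n1, hO1.1, ?_, z22, z21, ?_, ?_, ?_, ?_⟩
  · intro j hj
    exact (homZ_shift_iff _ _ _ _ _ rfl).2 (o1 _ (by omega))
  · intro j hj
    exact (homZ_shift_iff _ _ _ _ _ rfl).2 (o2 _ (by omega))
  · exact hfull _ (good_triang _) (good_of _ _ 2 (homN_self _ u1 n1) o1)
      (good_of _ _ 0 (z21 0).homN fun m _ => z21 m)
  · exact hfull _ (good_triang _)
      (good_of _ _ 0 (hN.of_iso ((shiftFunctorZero C ℤ).app O).symm) o2)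
      (good_of _ _ 0 ((homN_self _ u2 hO1.1).of_iso ((shiftFunctorZero C ℤ).app O1).symm) z22)
  · intro E hE
    have h := hfull _ (sep_triang E)
      (fun n => (homZ_shift_iff _ _ (n+2) (-2) _ (by omega)).1
        (homZ_of_target _ _ _ (hE (n+2)).1))
      (fun n => (hE n).2) E
    exact (IsZero.iff_id_eq_zero _).2 ((homZ_zero_iff _ _).1 (h 0) _)

/-- in `D^b(P¹_K)` — here axiomatized, following the paper, as a
`K`-linear triangulated category with a full strong exceptional pair `⟨O, O(1)⟩` with
`dim_K Hom(O, O(1)) = 2` (this characterizes `D^b(P¹_K)` by the paper's Corollary 2.14) —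
the full subcategory `A = { O^{⊕a}[2] ⊕ O(1)^{⊕b} }` is the heart of a bounded
t-structure. -/
theorem projectiveLine_tilted_heart {K : Type*} [Field K] [Linear K C]
    [HasFiniteBiproducts C] [HasBinaryBiproducts C]
    (O O1 : C)
    (hO : IsExceptional K O) (hO1 : IsExceptional K O1)
    (hseq : ∀ n : ℤ, ∀ f : O1 ⟶ O⟦n⟧, f = 0)
    (hstrong : ∀ n : ℤ, n ≠ 0 → ∀ f : O ⟶ O1⟦n⟧, f = 0)
    (hfull : ∀ S : Set C, IsTriangulatedSub S → O ∈ S → O1 ∈ S → ∀ X : C, X ∈ S)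
    (hdim : Module.finrank K (O ⟶ O1) = 2) :
    IsHeart (tiltedSet O O1) := by
  exact heart_of_simples (simples_of_pair O O1 hO hO1 hseq hstrong hfull hdim)

end Paper
end
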